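/- For n ≥ 1, the number of elements of ONC_{2n+1} (permutations x ≤_3 (1 2 ... 2n+1) in A_{2n+1}) is (1/(n+1)) C(3n+1, n), and the number of maximal chains of the interval [e, (1 2 ... 2n+1)]_3 is (2n+1)^{n-1}. -/

import Mathlib

open Equiv Equiv.Perm

/-- The word length of `x` with respect to a generating set `T`. -/
noncomputable def lenT {G : Type*} [Group G] (T : Set G) (x : G) : ℕ :=
  sInf {n | ∃ l : List G, (∀ t ∈ l, t ∈ T) ∧ l.prod = x ∧ l.length = n}

/-- The `T`-prefix order. -/
def leT {G : Type*} [Group G] (T : Set G) (x y : G) : Prop :=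
  lenT T y = lenT T x + lenT T (x⁻¹ * y)

/-- The set of 3-cycles of the symmetric group on `Fin N`. -/
def threeCycles (N : ℕ) : Set (Perm (Fin N)) := {σ | σ.IsThreeCycle}

/-- The set of transpositions of the symmetric group on `Fin N`. -/
def transpositions (N : ℕ) : Set (Perm (Fin N)) := {σ | σ.IsSwap}

/-- The number of odd cycles of a permutation, counting fixed points. -/
def ocyc {N : ℕ} (x : Perm (Fin N)) : ℕ :=
  (x.cycleType.filter (fun n => Odd n)).card + (N - x.cycleType.sum)


set_option linter.unusedSectionVars false
set_option linter.unusedVariables false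
section ONC
variable {α : Type*} [Fintype α] [DecidableEq α]

noncomputable def pd (c : Perm α) (x : α) : ℕ := Function.minimalPeriod c x

lemma pd_mem (c : Perm α) (x : α) : x ∈ Function.periodicPts c := by
  rw [Function.mem_periodicPts]
  refine ⟨orderOf c, orderOf_pos c, ?_⟩
  rw [Function.IsPeriodicPt, Function.IsFixedPt, Equiv.Perm.iterate_eq_pow, pow_orderOf_eq_one]
  rfl

lemma pd_pos (c : Perm α) (x : α) : 0 < pd c x :=
  Function.minimalPeriod_pos_of_mem_periodicPts (pd_mem c x)

lemma it_pd (c : Perm α) (x : α) : c^[pd c x] x = x := Function.iterate_minimalPeriod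

lemma it_inj {c : Perm α} {x : α} {m n : ℕ} (hm : m < pd c x) (hn : n < pd c x)
    (h : c^[m] x = c^[n] x) : m = n :=
  (Function.iterate_eq_iterate_iff_of_lt_minimalPeriod hm hn).1 h

lemma sc_it (c : Perm α) (x : α) (m : ℕ) : c.SameCycle x (c^[m] x) := by
  rw [Equiv.Perm.iterate_eq_pow]; exact ⟨m, by simp⟩

lemma sc_ex {c : Perm α} {x y : α} (h : c.SameCycle x y) : ∃ m < pd c x, c^[m] x = y := by
  obtain ⟨m, hm⟩ := h.exists_nat_pow_eq
  refine ⟨m % pd c x, Nat.mod_lt _ (pd_pos c x), ?_⟩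
  rw [pd, Function.iterate_mod_minimalPeriod_eq, Equiv.Perm.iterate_eq_pow, hm]

lemma pd_it (c : Perm α) (x : α) (m : ℕ) : pd c (c^[m] x) = pd c x :=
  Function.minimalPeriod_apply_iterate (pd_mem c x) m

lemma pd_sc {c : Perm α} {x y : α} (h : c.SameCycle x y) : pd c y = pd c x := by
  obtain ⟨m, -, rfl⟩ := sc_ex h
  exact pd_it c x m

lemma pd_eq_of {c : Perm α} {x : α} {k : ℕ} (hk : 0 < k) (h : c^[k] x = x)
    (h2 : ∀ m, 0 < m → m < k → c^[m] x ≠ x) : pd c x = k := by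
  have h1 : pd c x ≤ k := Function.IsPeriodicPt.minimalPeriod_le hk h
  rcases h1.lt_or_eq with h3 | h3
  · exact absurd (it_pd c x) (h2 _ (pd_pos c x) h3)
  · exact h3

lemma pd_one_iff {c : Perm α} {x : α} : pd c x = 1 ↔ c x = x :=
  Function.minimalPeriod_eq_one_iff_isFixedPt

lemma sum_cyc (c : Perm α) (a : α) (f : α → ℝ) :
    ∑ x, f x = ∑ x with ¬ c.SameCycle a x, f x + ∑ m ∈ Finset.range (pd c a), f (c^[m+1] a) := by
  classical
  rw [← Finset.sum_filter_add_sum_filter_not Finset.univ (fun x => ¬ c.SameCycle a x)]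
  congr 1
  symm
  have hL : c (c^[pd c a] a) = c a := by rw [it_pd]
  refine Finset.sum_bij (fun m _ => c^[m+1] a) ?_ ?_ ?_ ?_
  · intro m _
    simpa using sc_it c a (m+1)
  · intro m hm n hn h
    rw [Function.iterate_succ_apply', Function.iterate_succ_apply'] at h
    exact it_inj (Finset.mem_range.1 hm) (Finset.mem_range.1 hn) (c.injective h)
  · intro x hx
    have hx : c.SameCycle a x := by simpa using hx
    obtain ⟨m, hm, rfl⟩ := sc_ex hx
    rcases Nat.eq_zero_or_pos m with rfl | h0
    · refine ⟨pd c a - 1, Finset.mem_range.2 (by have := pd_pos c a; omega), ?_⟩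
      have : pd c a - 1 + 1 = pd c a := by have := pd_pos c a; omega
      rw [this, it_pd]; rfl
    · exact ⟨m - 1, Finset.mem_range.2 (by omega), by rw [Nat.sub_add_cancel h0]⟩
  · intros; rfl

section split
variable {c : Perm α} {a : α} {k : ℕ}

lemma s1_b (hk : 0 < k) (hkL : k < pd c a) (m : ℕ) (hm : m < k) :
    (⇑(c * swap a (c^[k] a)))^[m+1] (c^[k] a) = c^[m+1] a := by
  induction m with
  | zero => simp
  | succ m ih =>
    rw [Function.iterate_succ_apply', ih (by omega), Function.iterate_succ_apply' (⇑c) (m+1)]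
    rw [Perm.mul_apply, swap_apply_of_ne_of_ne]
    · intro h; have := it_inj (n := 0) (by omega) (by omega) h; omega
    · intro h; have := it_inj (by omega) (by omega) h; omega

lemma s1_a (hk : 0 < k) (hkL : k < pd c a) (m : ℕ) (hm : k + m < pd c a) :
    (⇑(c * swap a (c^[k] a)))^[m+1] a = c^[k+m+1] a := by
  induction m with
  | zero => simp [Function.iterate_succ_apply']
  | succ m ih =>
    rw [Function.iterate_succ_apply', ih (by omega), Function.iterate_succ_apply' (⇑c) (k+(m+1))]
    rw [Perm.mul_apply, swap_apply_of_ne_of_ne]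
    · rfl
    · intro h; have := it_inj (n := 0) (by omega) (by omega) h; omega
    · intro h; have := it_inj (by omega) (by omega) h; omega

lemma s1_x (x : α) (hx : ¬ c.SameCycle a x) (m : ℕ) :
    (⇑(c * swap a (c^[k] a)))^[m] x = c^[m] x := by
  induction m with
  | zero => rfl
  | succ m ih =>
    rw [Function.iterate_succ_apply', ih, Function.iterate_succ_apply']
    rw [Perm.mul_apply, swap_apply_of_ne_of_ne]
    · intro h; apply hx; have := sc_it c x m; rw [h] at this; exact this.symm
    · intro h; apply hx; have := sc_it c x m; rw [h] at this; exact (sc_it c a k).trans this.symm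

lemma s1_pd_b (hk : 0 < k) (hkL : k < pd c a) :
    pd (c * swap a (c^[k] a)) (c^[k] a) = k := by
  apply pd_eq_of hk
  · obtain ⟨j, rfl⟩ : ∃ j, k = j + 1 := ⟨k-1, by omega⟩
    exact s1_b hk hkL j (by omega)
  · intro m h0 h1 h
    obtain ⟨j, rfl⟩ : ∃ j, m = j + 1 := ⟨m-1, by omega⟩
    rw [s1_b hk hkL j (by omega)] at h
    have := it_inj (by omega) (by omega) h; omega

lemma s1_pd_a (hk : 0 < k) (hkL : k < pd c a) :
    pd (c * swap a (c^[k] a)) a = pd c a - k := by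
  apply pd_eq_of (by omega)
  · obtain ⟨j, hj⟩ : ∃ j, pd c a - k = j + 1 := ⟨pd c a - k-1, by omega⟩
    rw [hj, s1_a hk hkL j (by omega)]
    have : k + j + 1 = pd c a := by omega
    rw [this, it_pd]
  · intro m h0 h1 h
    obtain ⟨j, rfl⟩ : ∃ j, m = j + 1 := ⟨m-1, by omega⟩
    rw [s1_a hk hkL j (by omega)] at h
    have := it_inj (n := 0) (by omega) (by omega) h; omega

lemma s1_pd_x (x : α) (hx : ¬ c.SameCycle a x) :
    pd (c * swap a (c^[k] a)) x = pd c x := by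
  apply pd_eq_of (pd_pos c x)
  · rw [s1_x x hx, it_pd]
  · intro m h0 h1 h
    rw [s1_x x hx] at h
    have := it_inj (n := 0) h1 (by omega) h; omega

lemma s1_sum (hk : 0 < k) (hkL : k < pd c a) (ψ : ℕ → ℝ) :
    ∑ x, ψ (pd (c * swap a (c^[k] a)) x) = ∑ x, ψ (pd c x) - pd c a * ψ (pd c a)
      + k * ψ k + ((pd c a - k : ℕ) : ℝ) * ψ (pd c a - k) := by
  rw [sum_cyc c a, sum_cyc c a (fun x => ψ (pd c x))]
  have h1 : ∑ x with ¬ c.SameCycle a x, ψ (pd (c * swap a (c^[k] a)) x)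
      = ∑ x with ¬ c.SameCycle a x, ψ (pd c x) := by
    apply Finset.sum_congr rfl
    intro x hx
    rw [s1_pd_x x (by simpa using hx)]
  have h2 : ∑ m ∈ Finset.range (pd c a), ψ (pd c (c^[m+1] a)) = pd c a * ψ (pd c a) := by
    simp [pd_it, -Function.iterate_succ]
  have h3 : ∑ m ∈ Finset.range (pd c a), ψ (pd (c * swap a (c^[k] a)) (c^[m+1] a))
      = k * ψ k + ((pd c a - k : ℕ) : ℝ) * ψ (pd c a - k) := by
    have : pd c a = k + (pd c a - k) := by omega
    conv_lhs => rw [this]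
    rw [Finset.sum_range_add]
    congr 1
    · rw [Finset.sum_congr rfl (g := fun _ => ψ k)]
      · simp
      · intro m hm
        rw [← s1_b hk hkL m (Finset.mem_range.1 hm), pd_it, s1_pd_b hk hkL]
    · rw [Finset.sum_congr rfl (g := fun _ => ψ (pd c a - k))]
      · simp
      · intro m hm
        rw [← s1_a hk hkL m (by have := Finset.mem_range.1 hm; omega), pd_it, s1_pd_a hk hkL]
  rw [h1, h2, h3]; ring

lemma s1_sc {x y : α} (h : (c * swap a (c^[k] a)).SameCycle x y) : c.SameCycle x y := by
  obtain ⟨m, -, rfl⟩ := sc_ex h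
  clear h
  induction m with
  | zero => exact SameCycle.refl _ _
  | succ m ih =>
    rw [Function.iterate_succ_apply']
    refine ih.trans ?_
    generalize (⇑(c * swap a (c^[k] a)))^[m] x = z
    rw [Perm.mul_apply]
    refine SameCycle.trans (y := swap a (c^[k] a) z) ?_ (sc_it c _ 1)
    rcases eq_or_ne z a with rfl | h1
    · rw [swap_apply_left]; exact sc_it _ _ _
    · rcases eq_or_ne z (c^[k] a) with rfl | h2
      · rw [swap_apply_right]; exact (sc_it _ _ _).symm
      · rw [swap_apply_of_ne_of_ne h1 h2]

lemma s1_nsc (hk : 0 < k) (hkL : k < pd c a) :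
    ¬ (c * swap a (c^[k] a)).SameCycle (c^[k] a) a := by
  intro h
  obtain ⟨m, hm, h⟩ := sc_ex h
  rw [s1_pd_b hk hkL] at hm
  rcases Nat.eq_zero_or_pos m with rfl | h0
  · have := it_inj (m := k) (n := 0) (by omega) (by omega) h; omega
  · obtain ⟨j, rfl⟩ : ∃ j, m = j + 1 := ⟨m-1, by omega⟩
    rw [s1_b hk hkL j (by omega)] at h
    have := it_inj (m := j+1) (n := 0) (by omega) (by omega) h; omega

lemma merge_sc {a b : α} (h : ¬ c.SameCycle a b) : (c * swap a b).SameCycle a b := by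
  have key : ∀ m, m < pd c b → (⇑(c * swap a b))^[m+1] a = c^[m+1] b := by
    intro m hm
    induction m with
    | zero => simp
    | succ m ih =>
      rw [Function.iterate_succ_apply', ih (by omega), Function.iterate_succ_apply' (⇑c) (m+1)]
      rw [Perm.mul_apply, swap_apply_of_ne_of_ne]
      · intro h'; apply h; have := sc_it c b (m+1); rw [h'] at this; exact this.symm
      · intro h; have := it_inj (n := 0) (by omega) (by omega) h; omega
  have h1 := key (pd c b - 1) (by have := pd_pos c b; omega)
  have h2 : pd c b - 1 + 1 = pd c b := by have := pd_pos c b; omega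
  rw [h2, it_pd] at h1
  have := sc_it (c * swap a b) a (pd c b)
  rwa [h1] at this

end split
end ONC

set_option linter.unusedSectionVars false
set_option linter.unusedVariables false
section ONC
variable {α : Type*} [Fintype α] [DecidableEq α]
variable {c : Perm α} {a : α} {k l : ℕ}

lemma s1_cover (hk : 0 < k) (hkL : k < pd c a) {x : α} (hx : c.SameCycle a x) :
    (c * swap a (c^[k] a)).SameCycle (c^[k] a) x ∨ (c * swap a (c^[k] a)).SameCycle a x := by
  obtain ⟨m, hm, rfl⟩ := sc_ex hx
  rcases Nat.eq_zero_or_pos m with rfl | h0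
  · right; exact SameCycle.refl _ _
  obtain ⟨j, rfl⟩ : ∃ j, m = j + 1 := ⟨m-1, by omega⟩
  by_cases h : j < k
  · left; rw [← s1_b hk hkL j h]; exact sc_it _ _ _
  · right
    obtain ⟨r, rfl⟩ : ∃ r, j = k + r := ⟨j - k, by omega⟩
    rw [← s1_a hk hkL r (by omega)]; exact sc_it _ _ _

/-- inverse of the three-cycle `a → i → j → a`. -/
def uu (a i j : α) : Perm α := swap a j * swap j i

lemma uu_three {a i j : α} (h1 : a ≠ i) (h2 : a ≠ j) (h3 : i ≠ j) : (uu a i j).IsThreeCycle := by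
  rw [uu, swap_comm a j]
  exact isThreeCycle_swap_mul_swap_same h2.symm h3.symm h1

lemma three_uu {t : Perm α} (ht : t.IsThreeCycle) {a : α} (ha : t a ≠ a) :
    t⁻¹ = uu a (t a) (t (t a)) ∧ a ≠ t a ∧ a ≠ t (t a) ∧ t a ≠ t (t a) := by
  have h0 : a ∈ t.support := by simpa using ha
  have h3 : t (t (t a)) = a := by
    have : (t ^ 3) a = a := by simp [← ht.orderOf]
    simpa [pow_succ] using this
  have e1 : t⁻¹ a = t (t a) := by rw [Perm.inv_eq_iff_eq, h3]
  have e2 : t⁻¹ (t (t a)) = t a := by simp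
  have := (ht.inv.eq_swap_mul_swap_iff_mem_support (a := a)).2 (by simpa using ha)
  rw [e1, e2] at this
  refine ⟨this, ha.symm, ?_, fun h => ha (t.injective h).symm⟩
  intro h
  apply ha
  have := h3
  rw [← h] at this
  exact this

/-- index condition -/
structure Ix (c : Perm α) (a : α) (k l : ℕ) : Prop where
  h0 : 0 < k
  h1 : k < l
  h2 : l < pd c a

/-- the split permutation -/
def sp (c : Perm α) (a : α) (k l : ℕ) : Perm α := c * uu a (c^[k] a) (c^[l] a)

lemma Ix.k1 (h : Ix c a k l) : (⇑(c * swap a (c^[l] a)))^[k] (c^[l] a) = c^[k] a := by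
  obtain ⟨h0, h1, h2⟩ := h
  obtain ⟨j, rfl⟩ : ∃ j, k = j + 1 := ⟨k-1, by omega⟩
  exact s1_b (by omega) h2 j (by omega)

lemma Ix.pd1 (h : Ix c a k l) : pd (c * swap a (c^[l] a)) (c^[l] a) = l :=
  s1_pd_b (by have := h.h0; have := h.h1; omega) h.h2

lemma Ix.l0 (h : Ix c a k l) : 0 < l := by have := h.h0; have := h.h1; omega

lemma Ix.sp_eq (h : Ix c a k l) : sp c a k l = (c * swap a (c^[l] a)) *
    swap (c^[l] a) ((⇑(c * swap a (c^[l] a)))^[k] (c^[l] a)) := by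
  rw [h.k1, sp, uu, mul_assoc]

lemma Ix.k2 (h : Ix c a k l) : k < pd (c * swap a (c^[l] a)) (c^[l] a) := by
  rw [h.pd1]; exact h.h1

lemma Ix.pd_i (h : Ix c a k l) : pd (sp c a k l) (c^[k] a) = k := by
  have := s1_pd_b h.h0 h.k2
  rwa [← h.sp_eq, h.k1] at this

lemma Ix.pd_j (h : Ix c a k l) : pd (sp c a k l) (c^[l] a) = l - k := by
  have := s1_pd_a h.h0 h.k2
  rwa [← h.sp_eq, h.pd1] at this

lemma Ix.pd_a (h : Ix c a k l) : pd (sp c a k l) a = pd c a - l := by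
  rw [h.sp_eq, s1_pd_x _ (s1_nsc h.l0 h.h2), s1_pd_a h.l0 h.h2]

lemma Ix.pd_x (h : Ix c a k l) {x : α} (hx : ¬ c.SameCycle a x) : pd (sp c a k l) x = pd c x := by
  rw [h.sp_eq, s1_pd_x, s1_pd_x _ hx]
  intro h'
  exact hx ((sc_it c a l).trans (s1_sc h'))

lemma Ix.sc (h : Ix c a k l) {x y : α} (hx : (sp c a k l).SameCycle x y) : c.SameCycle x y := by
  rw [h.sp_eq] at hx
  exact s1_sc (s1_sc hx)

lemma Ix.nij (h : Ix c a k l) : ¬ (sp c a k l).SameCycle (c^[k] a) (c^[l] a) := by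
  have := s1_nsc h.h0 h.k2
  rwa [← h.sp_eq, h.k1] at this

lemma Ix.nja (h : Ix c a k l) : ¬ (sp c a k l).SameCycle (c^[l] a) a := by
  intro hx
  rw [h.sp_eq] at hx
  exact s1_nsc h.l0 h.h2 (s1_sc hx)

lemma Ix.nia (h : Ix c a k l) : ¬ (sp c a k l).SameCycle (c^[k] a) a := by
  intro hx
  rw [h.sp_eq] at hx
  have h1 := s1_sc hx
  have h2 := sc_it (c * swap a (c^[l] a)) (c^[l] a) k
  rw [h.k1] at h2
  exact s1_nsc h.l0 h.h2 (h2.trans h1)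

lemma Ix.cover (h : Ix c a k l) {x : α} (hx : c.SameCycle a x) :
    (sp c a k l).SameCycle (c^[k] a) x ∨ (sp c a k l).SameCycle (c^[l] a) x
      ∨ (sp c a k l).SameCycle a x := by
  rcases s1_cover h.l0 h.h2 hx with h1 | h1
  · have := s1_cover h.h0 h.k2 h1
    rw [← h.sp_eq, h.k1] at this
    tauto
  · right; right
    obtain ⟨m, -, rfl⟩ := sc_ex h1
    have := s1_x (k := k) a (s1_nsc h.l0 h.h2) m
    rw [← h.sp_eq] at this
    rw [← this]; exact sc_it _ _ _

lemma Ix.sum (h : Ix c a k l) (ψ : ℕ → ℝ) :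
    ∑ x, ψ (pd (sp c a k l) x) = ∑ x, ψ (pd c x) - pd c a * ψ (pd c a)
      + k * ψ k + ((l - k : ℕ) : ℝ) * ψ (l - k) + ((pd c a - l : ℕ) : ℝ) * ψ (pd c a - l) := by
  rw [h.sp_eq, s1_sum h.h0 h.k2, s1_sum h.l0 h.h2, h.pd1]
  ring

noncomputable def cyc (c : Perm α) : ℝ := ∑ x, 1 / (pd c x : ℝ)

lemma cyc_s1 (hk : 0 < k) (hkL : k < pd c a) : cyc (c * swap a (c^[k] a)) = cyc c + 1 := by
  rw [cyc, s1_sum hk hkL (fun n => 1 / (n : ℝ)), cyc]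
  have h1 : (k : ℝ) ≠ 0 := by positivity
  have h2 : ((pd c a - k : ℕ) : ℝ) ≠ 0 := by
    have : pd c a - k ≠ 0 := by omega
    exact_mod_cast this
  have h3 : (pd c a : ℝ) ≠ 0 := by
    have : pd c a ≠ 0 := by omega
    exact_mod_cast this
  field_simp
  ring

lemma Ix.cyc (h : Ix c a k l) : cyc (sp c a k l) = cyc c + 2 := by
  rw [h.sp_eq, cyc_s1 h.h0 h.k2, cyc_s1 h.l0 h.h2]; ring

lemma sc_ex' {a b : α} (h : c.SameCycle a b) (hab : a ≠ b) : ∃ k, 0 < k ∧ k < pd c a ∧ b = c^[k] a := by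
  obtain ⟨k, hk, rfl⟩ := sc_ex h
  refine ⟨k, ?_, hk, rfl⟩
  rcases Nat.eq_zero_or_pos k with rfl | h0
  · exact absurd rfl hab
  · exact h0

lemma cyc_swap {a b : α} (hab : a ≠ b) :
    (c.SameCycle a b ∧ _root_.cyc (c * swap a b) = _root_.cyc c + 1) ∨
    (¬ c.SameCycle a b ∧ _root_.cyc (c * swap a b) = _root_.cyc c - 1) := by
  by_cases h : c.SameCycle a b
  · left
    refine ⟨h, ?_⟩
    obtain ⟨k, h0, h1, rfl⟩ := sc_ex' h hab
    exact cyc_s1 h0 h1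
  · right
    refine ⟨h, ?_⟩
    have h' := merge_sc h
    obtain ⟨k, h0, h1, h2⟩ := sc_ex' h' hab
    have := cyc_s1 h0 h1
    rw [← h2, mul_assoc, swap_mul_self, mul_one] at this
    linarith

lemma cyc_uu {a i j : α} (h1 : a ≠ i) (h2 : a ≠ j) (h3 : i ≠ j) :
    _root_.cyc c - 2 ≤ _root_.cyc (c * uu a i j) ∧ _root_.cyc (c * uu a i j) ≤ _root_.cyc c + 2 ∧
    (_root_.cyc (c * uu a i j) = _root_.cyc c + 2 → ∃ k l, Ix c a k l ∧ i = c^[k] a ∧ j = c^[l] a) := by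
  rw [uu, ← mul_assoc]
  rcases cyc_swap (c := c) h2 with ⟨p, e⟩ | ⟨p, e⟩ <;>
  rcases cyc_swap (c := c * swap a j) h3.symm with ⟨q, e'⟩ | ⟨q, e'⟩
  · refine ⟨by linarith, by linarith, fun _ => ?_⟩
    obtain ⟨l, hl, hl', rfl⟩ := sc_ex' p h2
    obtain ⟨k, hk, hk', hk2⟩ := sc_ex' q h3.symm
    rw [s1_pd_b hl hl'] at hk'
    have hI : Ix c a k l := ⟨hk, hk', hl'⟩
    rw [hI.k1] at hk2
    exact ⟨k, l, hI, hk2, rfl⟩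
  all_goals exact ⟨by linarith, by linarith, fun h => by linarith⟩

lemma cyc_three {t : Perm α} (ht : t.IsThreeCycle) :
    _root_.cyc c - 2 ≤ _root_.cyc (c * t) ∧ _root_.cyc (c * t) ≤ _root_.cyc c + 2 := by
  have h1 : t⁻¹.IsThreeCycle := ht.inv
  obtain ⟨a, ha⟩ : ∃ a, t⁻¹ a ≠ a := by
    by_contra! h
    exact h1.ne_one (Equiv.ext h)
  obtain ⟨e, p, q, r⟩ := three_uu h1 ha
  rw [inv_inv] at e
  have := cyc_uu (c := c) p q r
  rw [e]
  exact ⟨this.1, this.2.1⟩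

lemma cyc_le : _root_.cyc c ≤ Fintype.card α := by
  rw [_root_.cyc]
  calc _ ≤ ∑ x : α, (1 : ℝ) := by
        apply Finset.sum_le_sum
        intro x _
        have : (1 : ℝ) ≤ pd c x := by exact_mod_cast pd_pos c x
        rw [div_le_one (by linarith)]; exact this
    _ = _ := by simp

lemma cyc_eq (h : _root_.cyc c = Fintype.card α) : c = 1 := by
  by_contra hc
  obtain ⟨a, ha⟩ : ∃ a, c a ≠ a := by
    by_contra! h
    exact hc (Equiv.ext h)
  have : _root_.cyc c < ∑ x : α, (1 : ℝ) := by
    apply Finset.sum_lt_sum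
    · intro x _
      have : (1 : ℝ) ≤ pd c x := by exact_mod_cast pd_pos c x
      rw [div_le_one (by linarith)]; exact this
    · refine ⟨a, Finset.mem_univ _, ?_⟩
      have h1 : pd c a ≠ 1 := fun h => ha (pd_one_iff.1 h)
      have : (1 : ℝ) < pd c a := by have := pd_pos c a; exact_mod_cast (by omega : 1 < pd c a)
      rw [div_lt_one (by linarith)]; exact this
  simp at this
  linarith

lemma pd_1 (x : α) : pd (1 : Perm α) x = 1 := pd_one_iff.2 rfl

lemma cyc_1 : _root_.cyc (1 : Perm α) = Fintype.card α := by simp [_root_.cyc, pd_1]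

def AllOdd (c : Perm α) : Prop := ∀ x, Odd (pd c x)

lemma Ix.odd (h : Ix c a k l) : AllOdd (sp c a k l) ↔
    AllOdd c ∧ Odd k ∧ Odd (l - k) ∧ Odd (pd c a - l) := by
  constructor
  · intro H
    have hi := H (c^[k] a); rw [h.pd_i] at hi
    have hj := H (c^[l] a); rw [h.pd_j] at hj
    have ha := H a; rw [h.pd_a] at ha
    refine ⟨fun x => ?_, hi, hj, ha⟩
    by_cases hx : c.SameCycle a x
    · rw [pd_sc hx]
      have := h.h0; have := h.h1; have := h.h2
      rw [Nat.odd_iff] at *; omega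
    · rw [← h.pd_x hx]; exact H x
  · rintro ⟨H, hi, hj, ha⟩ x
    by_cases hx : c.SameCycle a x
    · rcases h.cover hx with h1 | h1 | h1 <;> rw [pd_sc h1]
      · rwa [h.pd_i]
      · rwa [h.pd_j]
      · rwa [h.pd_a]
    · rw [h.pd_x hx]; exact H x

/-- existence of shape for a three-cycle gaining two cycles. -/
lemma three_ix {t : Perm α} (ht : t.IsThreeCycle) (ha : t a ≠ a)
    (h : _root_.cyc (c * t⁻¹) = _root_.cyc c + 2) :
    ∃ k l, Ix c a k l ∧ t a = c^[k] a ∧ t (t a) = c^[l] a ∧ c * t⁻¹ = sp c a k l := by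
  obtain ⟨e, p, q, r⟩ := three_uu ht ha
  rw [e] at h
  obtain ⟨k, l, hI, h1, h2⟩ := (cyc_uu p q r).2.2 h
  refine ⟨k, l, hI, h1, h2, ?_⟩
  rw [sp, e, h2, h1]

lemma geo (s : List (Perm α)) (hs : ∀ t ∈ s, t.IsThreeCycle) (c : Perm α) :
    _root_.cyc c - 2 * s.length ≤ _root_.cyc (c * s.prod) := by
  induction s generalizing c with
  | nil => simp
  | cons t s ih =>
    have h1 := (cyc_three (c := c) (hs t (by simp))).1
    have h2 := ih (fun t ht => hs t (by simp [ht])) (c * t)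
    rw [List.prod_cons, ← mul_assoc, List.length_cons]
    push_cast
    linarith

lemma geo1 (s : List (Perm α)) (hs : ∀ t ∈ s, t.IsThreeCycle) :
    (Fintype.card α : ℝ) - 2 * s.length ≤ _root_.cyc s.prod := by
  have := geo s hs 1
  rwa [one_mul, cyc_1] at this

lemma geo_odd (s : List (Perm α)) (hs : ∀ t ∈ s, t.IsThreeCycle)
    (h : _root_.cyc s.prod = (Fintype.card α : ℝ) - 2 * s.length) : AllOdd s.prod := by
  induction s using List.reverseRecOn with
  | nil => intro x; simp [pd_1]
  | append_singleton s t ih =>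
    have ht : t.IsThreeCycle := hs t (by simp)
    have hs' : ∀ t ∈ s, t.IsThreeCycle := fun t ht => hs t (by simp [ht])
    have e : s.prod = (s ++ [t]).prod * t⁻¹ := by simp
    have h1 := geo1 s hs'
    have h2 := (cyc_three (c := (s ++ [t]).prod) ht.inv).2
    rw [← e] at h2
    rw [List.length_append, List.length_singleton] at h
    push_cast at h
    have h3 : _root_.cyc s.prod = _root_.cyc (s ++ [t]).prod + 2 := by linarith
    have h4 := ih hs' (by linarith)
    obtain ⟨a, ha⟩ : ∃ a, t a ≠ a := by
      by_contra! h
      exact ht.ne_one (Equiv.ext h)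
    rw [e] at h3
    obtain ⟨k, l, hI, -, -, h5⟩ := three_ix ht ha h3
    rw [e, h5] at h4
    exact (hI.odd.1 h4).1

lemma Ix.inj (h : Ix c a k l) : a ≠ c^[k] a ∧ a ≠ c^[l] a ∧ c^[k] a ≠ c^[l] a := by
  obtain ⟨h0, h1, h2⟩ := h
  refine ⟨fun h => ?_, fun h => ?_, fun h => ?_⟩
  · have := it_inj (m := 0) (by omega) (by omega) h; omega
  · have := it_inj (m := 0) (by omega) (by omega) h; omega
  · have := it_inj (by omega) (by omega) h; omega

lemma Ix.three (h : Ix c a k l) : (uu a (c^[k] a) (c^[l] a)).IsThreeCycle :=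
  uu_three h.inj.1 h.inj.2.1 h.inj.2.2

/-- every all-odd permutation is a geodesic product. -/
lemma odd_list (hc : AllOdd c) : ∃ s : List (Perm α), (∀ t ∈ s, t.IsThreeCycle) ∧ s.prod = c ∧
    _root_.cyc c = (Fintype.card α : ℝ) - 2 * s.length := by
  obtain ⟨M, hM⟩ : ∃ M : ℕ, (Fintype.card α : ℝ) - M ≤ _root_.cyc c :=
    ⟨Fintype.card α, by rw [sub_self]; exact Finset.sum_nonneg (fun x _ => by positivity)⟩
  induction M using Nat.strong_induction_on generalizing c with
  | _ M ih =>
  by_cases h1 : c = 1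
  · subst h1
    exact ⟨[], by simp, by simp, by simp [cyc_1]⟩
  obtain ⟨a, ha⟩ : ∃ a, c a ≠ a := by
    by_contra! h
    exact h1 (Equiv.ext h)
  have h3 : pd c a ≠ 1 := fun h => ha (pd_one_iff.1 h)
  have h4 := hc a
  have hI : Ix c a 1 2 := ⟨by omega, by omega, by
    rw [Nat.odd_iff] at h4; omega⟩
  have hodd : AllOdd (sp c a 1 2) := hI.odd.2 ⟨hc, by decide, by decide, by
    have := hI.h2
    rw [Nat.odd_iff] at *; omega⟩
  have hcy := hI.cyc
  have hle := cyc_le (c := sp c a 1 2)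
  have hM2 : 2 ≤ M := by
    have : (2 : ℝ) ≤ M := by linarith
    exact_mod_cast this
  obtain ⟨s, hs, hp, hl⟩ := ih (M - 2) (by omega) hodd (by
    rw [Nat.cast_sub hM2]; push_cast; linarith)
  refine ⟨s ++ [(uu a (c^[1] a) (c^[2] a))⁻¹], ?_, ?_, ?_⟩
  · intro t ht
    rcases List.mem_append.1 ht with h | h
    · exact hs t h
    · rw [List.mem_singleton.1 h]; exact hI.three.inv
  · rw [List.prod_append, hp, sp, List.prod_singleton, mul_assoc, mul_inv_cancel, mul_one]
  · rw [List.length_append, List.length_singleton]; push_cast; linarith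

noncomputable def wt (φ : ℕ → ℝ) (c : Perm α) : ℝ :=
  Real.exp (∑ x, Real.log (φ (pd c x)) / (pd c x : ℝ))

lemma Ix.wt (h : Ix c a k l) {φ : ℕ → ℝ} (hφ : ∀ n, 0 < φ n) :
    wt φ (sp c a k l) = wt φ c / φ (pd c a) * (φ k * φ (l - k) * φ (pd c a - l)) := by
  have h1 : (k : ℝ) ≠ 0 := by have := h.h0; positivity
  have h2 : ((pd c a - l : ℕ) : ℝ) ≠ 0 := by
    have : pd c a - l ≠ 0 := by have := h.h2; omega
    exact_mod_cast this
  have h3 : (pd c a : ℝ) ≠ 0 := by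
    have : pd c a ≠ 0 := by have := h.h2; omega
    exact_mod_cast this
  have h4 : ((l - k : ℕ) : ℝ) ≠ 0 := by
    have : l - k ≠ 0 := by have := h.h1; omega
    exact_mod_cast this
  rw [_root_.wt, h.sum (fun n => Real.log (φ n) / (n : ℝ)), mul_div_cancel₀ _ h1,
    mul_div_cancel₀ _ h2, mul_div_cancel₀ _ h3, mul_div_cancel₀ _ h4, Real.exp_add, Real.exp_add,
    Real.exp_add, Real.exp_sub, Real.exp_log (hφ _), Real.exp_log (hφ _), Real.exp_log (hφ _),
    Real.exp_log (hφ _), _root_.wt]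
  ring

lemma wt_1 {φ : ℕ → ℝ} (h1 : φ 1 = 1) : _root_.wt φ (1 : Perm α) = 1 := by
  simp [_root_.wt, pd_1, h1]

lemma wt_single [Nonempty α] {φ : ℕ → ℝ} (hφ : ∀ n, 0 < φ n)
    (h : ∀ x, pd c x = Fintype.card α) : _root_.wt φ c = φ (Fintype.card α) := by
  have : (Fintype.card α : ℝ) ≠ 0 := by exact_mod_cast Fintype.card_ne_zero
  simp only [_root_.wt, h, Finset.sum_const, Finset.card_univ, nsmul_eq_mul]
  rw [mul_div_cancel₀ _ this, Real.exp_log (hφ _)]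

end ONC

set_option linter.unusedSectionVars false
set_option linter.unusedVariables false

noncomputable def ab (n : ℕ) (x : ℝ) : ℝ :=
  match n with
  | 0 => 1
  | m + 1 => x * (x + 2 * (m + 1)) ^ m / (m + 1).factorial

lemma ab_deriv (n : ℕ) (x : ℝ) : HasDerivAt (ab (n+1)) (ab n (x + 2)) x := by
  have h1 : HasDerivAt (fun x : ℝ => x * (x + 2 * ((n : ℝ) + 1)) ^ n / (n + 1).factorial)
      ((1 * (x + 2 * ((n : ℝ) + 1)) ^ n + x * (n * (x + 2 * ((n : ℝ) + 1)) ^ (n - 1) * 1))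
        / (n + 1).factorial) x := by
    apply HasDerivAt.div_const
    apply HasDerivAt.mul (hasDerivAt_id' x)
    apply HasDerivAt.pow
    exact (hasDerivAt_id' x).add_const _
  refine h1.congr_deriv ?_
  cases n with
  | zero => simp [ab]
  | succ m =>
    simp only [ab, Nat.factorial_succ, Nat.add_sub_cancel]
    push_cast
    have : ((m.factorial : ℕ) : ℝ) ≠ 0 := by positivity
    have h2 : (m : ℝ) + 1 ≠ 0 := by positivity
    have h3 : (m : ℝ) + 1 + 1 ≠ 0 := by positivity
    field_simp
    ring

lemma ab_conv (n : ℕ) (x y : ℝ) :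
    ∑ p ∈ Finset.HasAntidiagonal.antidiagonal n, ab p.1 x * ab p.2 y = ab n (x + y) := by
  induction n generalizing x with
  | zero => simp [ab]
  | succ n ih =>
    let D : ℝ → ℝ := fun x => ab (n+1) y + ∑ p ∈ Finset.HasAntidiagonal.antidiagonal n, ab (p.1+1) x * ab p.2 y
      - ab (n+1) (x + y)
    have hD : ∀ x, HasDerivAt D 0 x := by
      intro x
      have h1 : HasDerivAt (fun x => ∑ p ∈ Finset.HasAntidiagonal.antidiagonal n, ab (p.1+1) x * ab p.2 y)
          (∑ p ∈ Finset.HasAntidiagonal.antidiagonal n, ab p.1 (x+2) * ab p.2 y) x := by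
        apply HasDerivAt.fun_sum
        intro p _
        exact (ab_deriv p.1 x).mul_const _
      have h2 : HasDerivAt (fun x => ab (n+1) (x + y)) (ab n (x + y + 2)) x := by
        have := (ab_deriv n (x + y)).comp x ((hasDerivAt_id' x).add_const y)
        rw [mul_one] at this; exact this
      have h3 := (h1.const_add (ab (n+1) y)).sub h2
      refine h3.congr_deriv ?_
      rw [ih]
      rw [show x + 2 + y = x + y + 2 by ring, sub_self]
    have hc : D x = D 0 := by
      apply is_const_of_deriv_eq_zero
      · intro x; exact (hD x).differentiableAt
      · intro x; exact (hD x).deriv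
    have h0 : D 0 = 0 := by simp [D, ab]
    rw [Finset.Nat.sum_antidiagonal_succ]
    rw [h0] at hc
    simp only [D] at hc
    have e : ab 0 x = 1 := rfl
    simp only [e, one_mul]
    linarith

lemma ab_triple (n : ℕ) :
    ∑ p ∈ Finset.HasAntidiagonal.antidiagonal n, ∑ q ∈ Finset.HasAntidiagonal.antidiagonal p.2, ab p.1 1 * ab q.1 1 * ab q.2 1
      = 3 * (n + 1) / (2 * n + 3) * ab (n+1) 1 := by
  have : ∀ p ∈ Finset.HasAntidiagonal.antidiagonal n, ∑ q ∈ Finset.HasAntidiagonal.antidiagonal p.2, ab p.1 1 * ab q.1 1 * ab q.2 1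
      = ab p.1 1 * ab p.2 (1 + 1) := by
    intro p _
    rw [← ab_conv, Finset.mul_sum]
    simp only [mul_assoc]
  rw [Finset.sum_congr rfl this, ab_conv]
  cases n with
  | zero => norm_num [ab]
  | succ m =>
    simp only [ab, Nat.factorial_succ]
    push_cast
    have : ((m.factorial : ℕ) : ℝ) ≠ 0 := by positivity
    have h2 : (m : ℝ) + 1 ≠ 0 := by positivity
    have h3 : (m : ℝ) + 1 + 1 ≠ 0 := by positivity
    have h4 : 2 * ((m : ℝ) + 1) + 3 ≠ 0 := by positivity
    field_simp
    ring

lemma ab_pos (n : ℕ) : 0 < ab n 1 := by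
  cases n <;> simp only [ab] <;> positivity

def bb : ℕ → ℕ → ℕ
  | 0, _ => 1
  | _ + 1, 0 => 0
  | n + 1, s + 1 => bb (n + 1) s + bb n (s + 3)
termination_by n s => (n, s)

lemma bb_0 (s : ℕ) : bb 0 s = 1 := by rw [bb]
lemma bb_s0 (n : ℕ) : bb (n+1) 0 = 0 := by rw [bb]
lemma bb_ss (n s : ℕ) : bb (n+1) (s+1) = bb (n+1) s + bb n (s+3) := by rw [bb]

lemma bb_pos (n s : ℕ) : 0 < bb n (s+1) := by
  induction n generalizing s with
  | zero => simp [bb_0]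
  | succ n ih => rw [bb_ss]; have : 0 < bb n (s+3) := ih (s+2); omega

lemma bb_closed (n s : ℕ) : (3 * n + s) * bb n s = s * Nat.choose (3 * n + s) n := by
  induction n generalizing s with
  | zero => simp [bb_0]
  | succ n ih =>
    induction s with
    | zero => simp [bb_s0]
    | succ s ihs =>
      have h2 := ih (s + 3)
      rw [bb_ss]
      set M := 3 * n + s + 3 with hM
      rw [show 3 * (n + 1) + s = M by omega] at ihs
      rw [show 3 * n + (s + 3) = M by omega] at h2
      rw [show 3 * (n + 1) + (s + 1) = M + 1 by omega, Nat.choose_succ_succ]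
      have h3 := Nat.choose_succ_right_eq M n
      have hMn : M - n = 2 * n + s + 3 := by omega
      rw [hMn] at h3
      generalize M.choose n = C0 at *
      generalize M.choose (n+1) = C1 at *
      generalize bb (n+1) s = b1 at *
      generalize bb n (s+3) = b0 at *
      have hMp : (M : ℤ) ≠ 0 := by omega
      zify at *
      apply mul_left_cancel₀ hMp
      have hM' : (M : ℤ) = 3 * n + s + 3 := by rw [hM]
      have : (M : ℤ) * ((M + 1) * (b1 + b0)) = (M + 1) * (M * b1 + M * b0) := by ring
      rw [this, ihs, h2, hM']
      linear_combination -3 * h3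

lemma bb_conv (n x y : ℕ) :
    ∑ p ∈ Finset.HasAntidiagonal.antidiagonal n, bb p.1 x * bb p.2 y = bb n (x + y) := by
  induction n generalizing x with
  | zero => simp [bb_0]
  | succ n ih =>
    induction x with
    | zero =>
      rw [Finset.Nat.sum_antidiagonal_succ]
      simp [bb_s0, bb_0]
    | succ x ihx =>
      rw [Finset.Nat.sum_antidiagonal_succ] at *
      simp only [bb_ss, bb_0, add_mul, Finset.sum_add_distrib] at *
      rw [ih, show x + 1 + y = x + y + 1 by omega, bb_ss, ← ihx]
      rw [show x + 3 + y = x + y + 3 by omega]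
      ring

lemma bb_triple (n x y z : ℕ) :
    ∑ p ∈ Finset.HasAntidiagonal.antidiagonal n, ∑ q ∈ Finset.HasAntidiagonal.antidiagonal p.2, bb p.1 x * bb q.1 y * bb q.2 z
      = bb n (x + y + z) := by
  have : ∀ p ∈ Finset.HasAntidiagonal.antidiagonal n, ∑ q ∈ Finset.HasAntidiagonal.antidiagonal p.2, bb p.1 x * bb q.1 y * bb q.2 z
      = bb p.1 x * bb p.2 (y + z) := by
    intro p _
    rw [← bb_conv, Finset.mul_sum]
    simp only [mul_assoc]
  rw [Finset.sum_congr rfl this, bb_conv, add_assoc]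

lemma bb_two (n : ℕ) : (n + 1) * bb n 2 = Nat.choose (3 * n + 1) n := by
  have h1 := bb_closed n 2
  have h2 := Nat.choose_mul_succ_eq (3 * n + 1) n
  rw [show 3 * n + 1 + 1 - n = 2 * n + 2 by omega, show 3 * n + 1 + 1 = 3 * n + 2 by omega] at h2
  have : (3 * n + 2) * ((n + 1) * bb n 2) = (3 * n + 2) * Nat.choose (3 * n + 1) n := by
    linear_combination (n + 1) * h1 - h2
  exact Nat.eq_of_mul_eq_mul_left (by omega) this

def IxS (L : ℕ) : Finset (ℕ × ℕ) :=
  (Finset.range L ×ˢ Finset.range L).filter (fun p => 0 < p.1 ∧ p.1 < p.2)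

lemma mem_IxS {L : ℕ} {p : ℕ × ℕ} : p ∈ IxS L ↔ 0 < p.1 ∧ p.1 < p.2 ∧ p.2 < L := by
  simp only [IxS, Finset.mem_filter, Finset.mem_product, Finset.mem_range]; omega

lemma IxS_sum (n : ℕ) (F : ℕ → ℕ → ℕ → ℝ) :
    ∑ p ∈ IxS (2 * n + 3), (if Odd p.1 ∧ Odd (p.2 - p.1) ∧ Odd (2 * n + 3 - p.2) then
      F p.1 (p.2 - p.1) (2 * n + 3 - p.2) else 0) =
    ∑ p ∈ Finset.HasAntidiagonal.antidiagonal n, ∑ q ∈ Finset.HasAntidiagonal.antidiagonal p.2,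
      F (2 * p.1 + 1) (2 * q.1 + 1) (2 * q.2 + 1) := by
  rw [← Finset.sum_filter, Finset.sum_sigma']
  symm
  refine Finset.sum_bij' (fun x _ => (2 * x.1.1 + 1, 2 * x.1.1 + 2 * x.2.1 + 2))
    (fun p _ => ⟨((p.1 - 1)/2, (2 * n + 3 - p.1) / 2 - 1),
      ((p.2 - p.1 - 1) / 2, (2 * n + 3 - p.2 - 1) / 2)⟩) ?_ ?_ ?_ ?_ ?_
  · rintro ⟨⟨p, u⟩, ⟨q, r⟩⟩ h
    simp only [Finset.mem_sigma, Finset.HasAntidiagonal.mem_antidiagonal, Finset.mem_filter, mem_IxS, Nat.odd_iff] at *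
    omega
  · rintro ⟨k, l⟩ h
    simp only [Finset.mem_sigma, Finset.HasAntidiagonal.mem_antidiagonal, Finset.mem_filter, mem_IxS, Nat.odd_iff] at *
    omega
  · rintro ⟨⟨p, u⟩, ⟨q, r⟩⟩ h
    simp only [Finset.mem_sigma, Finset.HasAntidiagonal.mem_antidiagonal] at h
    simp only [Sigma.mk.injEq, Prod.mk.injEq, heq_eq_eq]
    omega
  · rintro ⟨k, l⟩ h
    simp only [Finset.mem_filter, mem_IxS, Nat.odd_iff] at h
    simp only [Prod.mk.injEq]
    omega
  · rintro ⟨⟨p, u⟩, ⟨q, r⟩⟩ h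
    simp only [Finset.mem_sigma, Finset.HasAntidiagonal.mem_antidiagonal] at h
    dsimp only
    congr 1 <;> omega

set_option linter.unusedSectionVars false
set_option linter.unusedVariables false
section ONC
variable {α : Type*} [Fintype α] [DecidableEq α]

lemma IxS_Ix {c : Perm α} {a : α} {p : ℕ × ℕ} : p ∈ IxS (pd c a) ↔ Ix c a p.1 p.2 := by
  rw [mem_IxS]
  exact ⟨fun h => ⟨h.1, h.2.1, h.2.2⟩, fun h => ⟨h.h0, h.h1, h.h2⟩⟩

open Classical in
noncomputable def GG : ℕ → Perm α → ℝ
  | 0, c => if c = 1 then 1 else 0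
  | m + 1, c => ∑ t : Perm α with t.IsThreeCycle, GG m (c * t⁻¹)

lemma GG_zero (m : ℕ) (c : Perm α) (h : cyc c < (Fintype.card α : ℝ) - 2 * m) : GG m c = 0 := by
  induction m generalizing c with
  | zero =>
    rw [GG, if_neg]
    rintro rfl
    rw [cyc_1] at h
    simp at h
  | succ m ih =>
    rw [GG]
    apply Finset.sum_eq_zero
    intro t ht
    apply ih
    have := (cyc_three (c := c) (IsThreeCycle.inv (by simpa using ht : t.IsThreeCycle))).2
    push_cast at h
    linarith

open Classical in
lemma sum_moving (c : Perm α) (a : α) (g : Perm α → ℝ)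
    (hg : ∀ t : Perm α, t.IsThreeCycle → g (c * t⁻¹) ≠ 0 → cyc (c * t⁻¹) = cyc c + 2) :
    ∑ t : Perm α with t.IsThreeCycle ∧ t a ≠ a, g (c * t⁻¹) =
      ∑ p ∈ IxS (pd c a), g (sp c a p.1 p.2) := by
  symm
  apply Finset.sum_bij_ne_zero (fun p _ _ => (uu a (c^[p.1] a) (c^[p.2] a))⁻¹)
  · intro p hp _
    have hI := IxS_Ix.1 hp
    simp only [Finset.mem_filter, Finset.mem_univ, true_and]
    refine ⟨hI.three.inv, ?_⟩
    obtain ⟨h1, h2, h3⟩ := hI.inj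
    rw [Ne, Perm.inv_eq_iff_eq, uu, Perm.mul_apply, swap_apply_of_ne_of_ne h2 h1, swap_apply_left]
    exact h2
  · intro p hp _ q hq _ h
    have hI := IxS_Ix.1 hp
    have hJ := IxS_Ix.1 hq
    have h := inv_injective h
    have e1 : ∀ p : ℕ × ℕ, Ix c a p.1 p.2 → uu a (c^[p.1] a) (c^[p.2] a) a = c^[p.2] a := by
      intro p hI
      obtain ⟨h1, h2, h3⟩ := hI.inj
      rw [uu, Perm.mul_apply, swap_apply_of_ne_of_ne h2 h1, swap_apply_left]
    have e2 : ∀ p : ℕ × ℕ, Ix c a p.1 p.2 → uu a (c^[p.1] a) (c^[p.2] a) (c^[p.2] a) = c^[p.1] a := by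
      intro p hI
      obtain ⟨h1, h2, h3⟩ := hI.inj
      rw [uu, Perm.mul_apply, swap_apply_left, swap_apply_of_ne_of_ne h1.symm h3]
    have h2 := e1 p hI
    rw [h, e1 q hJ] at h2
    have h1 := e2 p hI
    rw [h, ← h2, e2 q hJ] at h1
    have a1 := hI.h0; have a2 := hI.h1; have a3 := hI.h2
    have b1 := hJ.h0; have b2 := hJ.h1; have b3 := hJ.h2
    ext
    · exact it_inj (by omega) (by omega) h1.symm
    · exact it_inj (by omega) (by omega) h2.symm
  · intro t ht hne
    simp only [Finset.mem_filter, Finset.mem_univ, true_and] at ht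
    obtain ⟨k, l, hI, h1, h2, h3⟩ := three_ix ht.1 ht.2 (hg t ht.1 hne)
    refine ⟨(k, l), IxS_Ix.2 hI, ?_, ?_⟩
    · rw [← h3]; exact hne
    · rw [← h1, ← h2, ← (three_uu ht.1 ht.2).1, inv_inv]
  · intro p hp _
    rw [inv_inv]; rfl

noncomputable def φ2 (L : ℕ) : ℝ := ab ((L - 1) / 2) 1

lemma φ2_pos (L : ℕ) : 0 < φ2 L := ab_pos _

lemma IxS_one : IxS 1 = ∅ := by
  ext p; rw [mem_IxS]; simp; omega

open Classical in
lemma GG_step (m : ℕ) (c : Perm α) (h : cyc c = (Fintype.card α : ℝ) - 2 * ((m + 1 : ℕ) : ℝ)) :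
    3 * GG (m+1) c = ∑ a, ∑ p ∈ IxS (pd c a), GG m (sp c a p.1 p.2) := by
  have h1 : ∀ a : α, ∑ p ∈ IxS (pd c a), GG m (sp c a p.1 p.2)
      = ∑ t : Perm α with t.IsThreeCycle, if t a ≠ a then GG m (c * t⁻¹) else 0 := by
    intro a
    rw [← sum_moving c a (GG m), ← Finset.sum_filter, Finset.filter_filter]
    intro t ht hne
    have h2 := (cyc_three (c := c) ht.inv).2
    by_contra h3
    apply hne
    apply GG_zero
    push_cast at h
    have := lt_of_le_of_ne h2 h3
    linarith
  rw [Finset.sum_congr rfl (fun a _ => h1 a), Finset.sum_comm, GG, Finset.mul_sum]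
  apply Finset.sum_congr rfl
  intro t ht
  have ht : t.IsThreeCycle := by simpa using ht
  rw [← Finset.sum_filter, Finset.sum_const]
  have : (Finset.univ.filter (fun a => t a ≠ a)).card = 3 := by
    rw [← ht.card_support]; congr 1
  rw [this]; simp

open Classical in
lemma GG_main (m : ℕ) (c : Perm α) (h : cyc c = (Fintype.card α : ℝ) - 2 * m) :
    GG m c = if AllOdd c then m.factorial * wt φ2 c else 0 := by
  induction m generalizing c with
  | zero =>
    have hc : c = 1 := cyc_eq (by simpa using h)
    subst hc
    have ho : AllOdd (1 : Perm α) := fun x => by rw [pd_1]; exact odd_one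
    rw [if_pos ho, wt_1 (by simp [φ2, ab])]
    simp [GG]
  | succ m ih =>
    have h3 := GG_step m c h
    have h4 : ∀ a, ∀ p ∈ IxS (pd c a), GG m (sp c a p.1 p.2) = if AllOdd c then
        m.factorial * wt φ2 c / φ2 (pd c a) * (if Odd p.1 ∧ Odd (p.2 - p.1) ∧ Odd (pd c a - p.2) then
        φ2 p.1 * φ2 (p.2 - p.1) * φ2 (pd c a - p.2) else 0) else 0 := by
      intro a p hp
      have hI := IxS_Ix.1 hp
      rw [ih _ (by rw [hI.cyc, h]; push_cast; ring), hI.wt φ2_pos]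
      simp only [hI.odd]
      by_cases h1 : AllOdd c <;> by_cases h2 : Odd p.1 ∧ Odd (p.2 - p.1) ∧ Odd (pd c a - p.2) <;>
        simp [h1, h2]
      ring
    have h5 : ∀ a, ∑ p ∈ IxS (pd c a), GG m (sp c a p.1 p.2) = if AllOdd c then
        m.factorial * wt φ2 c * (3 / 2 * (1 - 1 / (pd c a : ℝ))) else 0 := by
      intro a
      rw [Finset.sum_congr rfl (h4 a)]
      by_cases h1 : AllOdd c
      · simp only [if_pos h1]
        rw [← Finset.mul_sum]
        obtain ⟨n, hn⟩ := h1 a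
        rw [hn]
        cases n with
        | zero => simp [IxS_one]
        | succ n =>
          rw [show 2 * (n + 1) + 1 = 2 * n + 3 by ring, IxS_sum n (fun x y z => φ2 x * φ2 y * φ2 z)]
          have e : ∀ n, φ2 (2 * n + 1) = ab n 1 := by
            intro n; simp [φ2]
          simp only [e]
          rw [ab_triple, show 2 * n + 3 = 2 * (n + 1) + 1 by ring, e]
          have := (ab_pos (n+1)).ne'
          have h3 : (2 * (n : ℝ) + 3) ≠ 0 := by positivity
          have h4 : (2 * ((n : ℝ) + 1) + 1) ≠ 0 := by positivity
          push_cast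
          field_simp
          ring
      · simp [h1]
    rw [Finset.sum_congr rfl (fun a _ => h5 a)] at h3
    by_cases h1 : AllOdd c
    · simp only [if_pos h1] at h3 ⊢
      rw [← Finset.mul_sum, ← Finset.mul_sum, Finset.sum_sub_distrib] at h3
      change _ = _ * (_ * (_ - cyc c)) at h3
      rw [h] at h3
      simp at h3
      rw [Nat.factorial_succ]
      push_cast
      linarith
    · simp only [if_neg h1] at h3 ⊢
      simpa using h3

lemma GG_card (m : ℕ) (c : Perm α) :
    GG m c = Nat.card {w : Fin m → Perm α // (∀ i, (w i).IsThreeCycle) ∧ (List.ofFn w).prod = c} := by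
  classical
  induction m generalizing c with
  | zero =>
    rw [GG]
    by_cases h : c = 1
    · subst h
      simp [Nat.card_eq_fintype_card]
    · simp [h, Ne.symm h]
  | succ m ih =>
    rw [GG]
    let e : {w : Fin (m+1) → Perm α // (∀ i, (w i).IsThreeCycle) ∧ (List.ofFn w).prod = c} ≃
      Σ t : {t : Perm α // t.IsThreeCycle},
        {w : Fin m → Perm α // (∀ i, (w i).IsThreeCycle) ∧ (List.ofFn w).prod = c * t.1⁻¹} :=
      { toFun := fun w => ⟨⟨w.1 (Fin.last m), w.2.1 _⟩, ⟨fun i => w.1 i.castSucc, fun i => w.2.1 _, by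
          have := w.2.2
          rw [List.ofFn_succ', List.concat_eq_append, List.prod_append, List.prod_singleton] at this
          exact eq_mul_inv_of_mul_eq this⟩⟩
        invFun := fun p => ⟨Fin.snoc (α := fun _ => Perm α) p.2.1 p.1.1, by
          refine ⟨fun i => ?_, ?_⟩
          · refine Fin.lastCases ?_ (fun i => ?_) i
            · rw [Fin.snoc_last]; exact p.1.2
            · rw [Fin.snoc_castSucc]; exact p.2.2.1 i
          · rw [List.ofFn_succ', List.concat_eq_append, List.prod_append, List.prod_singleton]
            simp only [Fin.snoc_last, Fin.snoc_castSucc]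
            rw [p.2.2.2, mul_assoc, inv_mul_cancel, mul_one]⟩
        left_inv := by
          rintro ⟨w, hw⟩
          apply Subtype.ext
          exact Fin.snoc_init_self (α := fun _ => Perm α) w
        right_inv := by
          rintro ⟨⟨t, ht⟩, ⟨w, hw⟩⟩
          have h1 : (Fin.snoc (α := fun _ => Perm α) w t) (Fin.last m) = t := Fin.snoc_last _ _
          have h2 : (fun i : Fin m => (Fin.snoc (α := fun _ => Perm α) w t) i.castSucc) = w := by
            funext i; exact Fin.snoc_castSucc _ _ _
          simp only [Fin.snoc_castSucc]
          congr 1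
          · simp
          · congr 1
            all_goals simp }
    rw [Nat.card_congr e, Nat.card_sigma]
    simp only [ih]
    push_cast
    rw [← Finset.sum_subtype (p := fun t : Perm α => t.IsThreeCycle)
      (f := fun t => (Nat.card {w : Fin m → Perm α // (∀ i, (w i).IsThreeCycle) ∧ (List.ofFn w).prod = c * t⁻¹} : ℝ))]
    intro t; simp

end ONC

set_option linter.unusedSectionVars false
set_option linter.unusedVariables false
section ONC
variable {α : Type*} [Fintype α] [DecidableEq α]

lemma pd_conj (f g : Perm α) (x : α) : pd (g * f * g⁻¹) (g x) = pd f x := by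
  rw [pd, pd, Function.minimalPeriod_eq_minimalPeriod_iff]
  intro n
  have : Function.Semiconj g f (g * f * g⁻¹ : Perm α) := by
    intro y; simp
  have h := (this.iterate_right n) x
  rw [Function.IsPeriodicPt, Function.IsPeriodicPt, Function.IsFixedPt, Function.IsFixedPt, ← h]
  exact g.injective.eq_iff

lemma odd_conj (f g : Perm α) (h : AllOdd f) : AllOdd (g * f * g⁻¹) := by
  intro x
  have := pd_conj f g (g⁻¹ x)
  rw [show g (g⁻¹ x) = x by simp] at this
  rw [this]; exact h _

lemma cyc_conj (f g : Perm α) : cyc (g * f * g⁻¹) = cyc f := by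
  rw [cyc, cyc]
  symm
  apply Fintype.sum_equiv g
  intro x
  rw [pd_conj]

def RR (c x : Perm α) : Prop :=
  AllOdd x ∧ AllOdd (x⁻¹ * c) ∧ cyc x + cyc (x⁻¹ * c) = Fintype.card α + cyc c

lemma RR_le {c x : Perm α} (h1 : AllOdd x) (h2 : AllOdd (x⁻¹ * c)) :
    cyc x + cyc (x⁻¹ * c) ≤ Fintype.card α + cyc c ∧
    (cyc x + cyc (x⁻¹ * c) = Fintype.card α + cyc c → AllOdd c) := by
  obtain ⟨s, hs, hp, hl⟩ := odd_list h1
  obtain ⟨s', hs', hp', hl'⟩ := odd_list h2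
  have e : (s ++ s').prod = c := by rw [List.prod_append, hp, hp']; simp
  have hss : ∀ t ∈ s ++ s', t.IsThreeCycle := by
    intro t ht
    rcases List.mem_append.1 ht with h | h
    · exact hs t h
    · exact hs' t h
  have h3 := geo1 _ hss
  have h4 := geo_odd _ hss
  rw [e, List.length_append] at h3 h4
  push_cast at h3 h4
  exact ⟨by linarith, fun h => h4 (by linarith)⟩

open Classical in
noncomputable def KK (c : Perm α) (S D : Finset α) : Finset (Perm α) :=
  Finset.univ.filter (fun x => RR c x ∧ (∀ s ∈ S, x s = s) ∧ ∀ d ∈ D, x d = c d)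

lemma mem_KK {c x : Perm α} {S D : Finset α} :
    x ∈ KK c S D ↔ RR c x ∧ (∀ s ∈ S, x s = s) ∧ ∀ d ∈ D, x d = c d := by
  simp [KK]

lemma uu_a {a i j : α} (h1 : a ≠ i) (h2 : a ≠ j) (h3 : i ≠ j) : uu a i j a = j := by
  rw [uu, Perm.mul_apply, swap_apply_of_ne_of_ne h2 h1, swap_apply_left]
lemma uu_j {a i j : α} (h1 : a ≠ i) (h2 : a ≠ j) (h3 : i ≠ j) : uu a i j j = i := by
  rw [uu, Perm.mul_apply, swap_apply_left, swap_apply_of_ne_of_ne h1.symm h3]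
lemma uu_i {a i j : α} : uu a i j i = a := by
  rw [uu, Perm.mul_apply, swap_apply_right, swap_apply_right]
lemma uu_x {a i j x : α} (h1 : x ≠ a) (h2 : x ≠ i) (h3 : x ≠ j) : uu a i j x = x := by
  rw [uu, Perm.mul_apply, swap_apply_of_ne_of_ne h3 h2, swap_apply_of_ne_of_ne h1 h3]

lemma Ix12 {y : Perm α} {a : α} (h1 : y a ≠ a) (h2 : y (y a) ≠ a) : Ix y a 1 2 := by
  refine ⟨by omega, by omega, ?_⟩
  have h3 := pd_pos y a
  have h4 : pd y a ≠ 1 := fun h => h1 (pd_one_iff.1 h)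
  have h5 : pd y a ≠ 2 := fun h => h2 (by have := it_pd y a; rw [h] at this; exact this)
  omega

lemma Ix12_odd {y : Perm α} {a : α} (hI : Ix y a 1 2) : AllOdd (sp y a 1 2) ↔ AllOdd y := by
  rw [hI.odd]
  refine ⟨fun h => h.1, fun h => ⟨h, by decide, by decide, ?_⟩⟩
  have := h a
  have := hI.h2
  rw [Nat.odd_iff] at *
  omega

lemma peel_RR {c x : Perm α} {a : α} {k l : ℕ} (hI : Ix c a k l)
    (hi : x (c^[k] a) = c a) (hj : x (c^[l] a) = c (c^[k] a)) :
    RR c x ↔ RR (sp c a k l) x := by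
  obtain ⟨n1, n2, n3⟩ := hI.inj
  have e1 : (x⁻¹ * c) a = c^[k] a := by rw [Perm.mul_apply, ← hi]; simp
  have e2 : (x⁻¹ * c) ((x⁻¹ * c) a) = c^[l] a := by rw [e1, Perm.mul_apply, ← hj]; simp
  have hJ : Ix (x⁻¹ * c) a 1 2 := Ix12 (by rw [e1]; exact n1.symm) (by rw [e2]; exact n2.symm)
  have e : x⁻¹ * sp c a k l = sp (x⁻¹ * c) a 1 2 := by
    have e3 : (⇑(x⁻¹ * c))^[1] a = c^[k] a := e1
    have e4 : (⇑(x⁻¹ * c))^[2] a = c^[l] a := e2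
    rw [sp, sp, e3, e4, mul_assoc]
  rw [RR, RR, e, Ix12_odd hJ, hJ.cyc, hI.cyc]
  constructor
  · rintro ⟨h1, h2, h3⟩
    exact ⟨h1, h2, by linarith⟩
  · rintro ⟨h1, h2, h3⟩
    exact ⟨h1, h2, by linarith⟩

lemma peel_ex {c x : Perm α} {a : α} (h : RR c x) (ha : x a ≠ c a) :
    ∃ k l, Ix c a k l ∧ x (c^[k] a) = c a ∧ x (c^[l] a) = c (c^[k] a) := by
  obtain ⟨h1, h2, h3⟩ := h
  have hya : (x⁻¹ * c) a ≠ a := by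
    rw [Perm.mul_apply, Ne, Perm.inv_eq_iff_eq]; exact ha.symm
  have hyya : (x⁻¹ * c) ((x⁻¹ * c) a) ≠ a := by
    intro h
    have hd : pd (x⁻¹ * c) a ≤ 2 := Function.IsPeriodicPt.minimalPeriod_le (by omega) h
    have h4 : pd (x⁻¹ * c) a ≠ 1 := fun h => hya (pd_one_iff.1 h)
    have := h2 a
    rw [Nat.odd_iff] at this
    omega
  have hJ := Ix12 hya hyya
  have n1 : a ≠ (x⁻¹ * c) a := hJ.inj.1
  have n2 : a ≠ (x⁻¹ * c) ((x⁻¹ * c) a) := hJ.inj.2.1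
  have n3 : (x⁻¹ * c) a ≠ (x⁻¹ * c) ((x⁻¹ * c) a) := hJ.inj.2.2
  have e : sp (x⁻¹ * c) a 1 2 = x⁻¹ * (c * uu a ((x⁻¹ * c) a) ((x⁻¹ * c) ((x⁻¹ * c) a))) := by
    rw [← mul_assoc]; rfl
  have ho := (Ix12_odd hJ).2 h2
  have hcy := hJ.cyc
  rw [e] at ho hcy
  have h5 := (RR_le h1 ho).1
  obtain ⟨-, h6, h7⟩ := cyc_uu (c := c) n1 n2 n3
  obtain ⟨k, l, hI, hk, hl⟩ := h7 (by linarith)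
  refine ⟨k, l, hI, ?_, ?_⟩
  · rw [← hk]; simp
  · rw [← hl, ← hk]; simp

lemma sp_i {c : Perm α} {a : α} {k l : ℕ} : sp c a k l (c^[k] a) = c a := by
  rw [sp, Perm.mul_apply, uu_i]
lemma sp_j {c : Perm α} {a : α} {k l : ℕ} (hI : Ix c a k l) :
    sp c a k l (c^[l] a) = c (c^[k] a) := by
  rw [sp, Perm.mul_apply, uu_j hI.inj.1 hI.inj.2.1 hI.inj.2.2]
lemma sp_x {c : Perm α} {a : α} {k l : ℕ} {x : α} (hx : ¬ c.SameCycle a x) :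
    sp c a k l x = c x := by
  rw [sp, Perm.mul_apply, uu_x]
  · rintro rfl; exact hx (SameCycle.refl _ _)
  · rintro rfl; exact hx (sc_it _ _ _)
  · rintro rfl; exact hx (sc_it _ _ _)

lemma peel (c : Perm α) (a : α) (S D : Finset α) (hD : ∀ d ∈ D, ¬ c.SameCycle a d) :
    ((KK c S D).filter (fun x => x a ≠ c a)).card =
    ∑ p ∈ IxS (pd c a), (KK (sp c a p.1 p.2) S (insert (c^[p.1] a) (insert (c^[p.2] a) D))).card := by
  classical
  rw [← Finset.card_biUnion]
  · congr 1
    ext x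
    simp only [Finset.mem_filter, Finset.mem_biUnion, mem_KK, Finset.mem_insert]
    constructor
    · rintro ⟨⟨hR, hS, hDx⟩, hx⟩
      obtain ⟨k, l, hI, hi, hj⟩ := peel_ex hR hx
      refine ⟨(k, l), IxS_Ix.2 hI, (peel_RR hI hi hj).1 hR, hS, ?_⟩
      rintro d (rfl | rfl | hd)
      · rw [sp_i, hi]
      · rw [sp_j hI, hj]
      · rw [sp_x (hD d hd), hDx d hd]
    · rintro ⟨⟨k, l⟩, hp, hR, hS, hDx⟩
      have hI : Ix c a k l := IxS_Ix.1 hp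
      have hi := hDx _ (Or.inl rfl)
      have hj := hDx _ (Or.inr (Or.inl rfl))
      rw [sp_i] at hi
      rw [sp_j hI] at hj
      refine ⟨⟨(peel_RR hI hi hj).2 hR, hS, fun d hd => ?_⟩, ?_⟩
      · rw [hDx d (Or.inr (Or.inr hd)), sp_x (hD d hd)]
      · intro h
        rw [← hi] at h
        exact hI.inj.1 (x.injective h)
  · intro p hp q hq hpq
    rw [Function.onFun, Finset.disjoint_left]
    intro x hx hx'
    apply hpq
    have hI := IxS_Ix.1 hp
    have hJ := IxS_Ix.1 hq
    have p1 := (mem_KK.1 hx).2.2 _ (Finset.mem_insert_self _ _)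
    have q1 := (mem_KK.1 hx').2.2 _ (Finset.mem_insert_self _ _)
    have p2 := (mem_KK.1 hx).2.2 _ (Finset.mem_insert_of_mem (Finset.mem_insert_self _ _))
    have q2 := (mem_KK.1 hx').2.2 _ (Finset.mem_insert_of_mem (Finset.mem_insert_self _ _))
    rw [sp_i] at p1 q1
    rw [sp_j hI] at p2
    rw [sp_j hJ] at q2
    have a1 := hI.h0; have a2 := hI.h1; have a3 := hI.h2
    have b1 := hJ.h0; have b2 := hJ.h1; have b3 := hJ.h2
    have e1 : c^[p.1] a = c^[q.1] a := x.injective (p1.trans q1.symm)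
    rw [e1] at p2
    have e2 : c^[p.2] a = c^[q.2] a := x.injective (p2.trans q2.symm)
    ext
    · exact it_inj (by omega) (by omega) e1
    · exact it_inj (by omega) (by omega) e2

lemma RR_dual {c x : Perm α} (h : RR c x) : RR c (c * x⁻¹) := by
  obtain ⟨h1, h2, h3⟩ := h
  have e : (c * x⁻¹)⁻¹ * c = x := by group
  have e2 : c * x⁻¹ = x * (x⁻¹ * c) * x⁻¹ := by group
  refine ⟨?_, ?_, ?_⟩
  · rw [e2]; exact odd_conj _ _ h2
  · rw [e]; exact h1
  · rw [e, e2, cyc_conj]; linarith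

lemma RR_dual' {c x : Perm α} (h : RR c x) : RR c (x⁻¹ * c) := by
  obtain ⟨h1, h2, h3⟩ := h
  have e : (x⁻¹ * c)⁻¹ * c = c⁻¹ * x * (c⁻¹)⁻¹ := by group
  refine ⟨h2, ?_, ?_⟩
  · rw [e]; exact odd_conj _ _ h1
  · rw [e, cyc_conj]; linarith

lemma KK_dual (c : Perm α) (S D : Finset α) : (KK c S D).card = (KK c (D.image c) S).card := by
  apply Finset.card_nbij' (fun x => c * x⁻¹) (fun x => x⁻¹ * c)
  · intro x hx
    rw [Finset.mem_coe, mem_KK] at *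
    obtain ⟨h1, h2, h3⟩ := hx
    refine ⟨RR_dual h1, ?_, ?_⟩
    · intro s hs
      obtain ⟨d, hd, rfl⟩ := Finset.mem_image.1 hs
      rw [Perm.mul_apply, ← h3 d hd, show x⁻¹ (x d) = d by simp, h3 d hd]
    · intro s hs
      rw [Perm.mul_apply]
      congr 1
      rw [Perm.inv_eq_iff_eq, h2 s hs]
  · intro x hx
    rw [Finset.mem_coe, mem_KK] at *
    obtain ⟨h1, h2, h3⟩ := hx
    refine ⟨RR_dual' h1, ?_, ?_⟩
    · intro s hs
      rw [Perm.mul_apply, Perm.inv_eq_iff_eq, h3 s hs]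
    · intro d hd
      rw [Perm.mul_apply, Perm.inv_eq_iff_eq, h2 (c d) (Finset.mem_image_of_mem _ hd)]
  · intro x _; simp
  · intro x _; simp

noncomputable def φH (L : ℕ) : ℝ := bb ((L - 1) / 2) 2
noncomputable def φP (L : ℕ) : ℝ := bb ((L - 1) / 2) 1
noncomputable def rr (L : ℕ) : ℝ := φP L / φH L

lemma φH_pos (L : ℕ) : 0 < φH L := by
  have := bb_pos ((L - 1)/2) 1
  rw [φH]; exact_mod_cast this

lemma φH_rr (L : ℕ) : φH L * rr L = φP L := by
  rw [rr]; have := (φH_pos L).ne'; field_simp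

noncomputable def val (c : Perm α) (S D : Finset α) : ℝ :=
  wt φH c * (∏ s ∈ S, rr (pd c s)) * (∏ d ∈ D, rr (pd c d))

structure Sepp (c : Perm α) (S D : Finset α) : Prop where
  sep : ∀ x ∈ S ∪ D, ∀ y ∈ S ∪ D, c.SameCycle x y → x = y
  dis : Disjoint S D

lemma φ_sum1 (n : ℕ) :
    ∑ p ∈ IxS (2 * n + 3), (if Odd p.1 ∧ Odd (p.2 - p.1) ∧ Odd (2 * n + 3 - p.2) then
      φP p.1 * φP (p.2 - p.1) * φP (2 * n + 3 - p.2) else 0) = φP (2 * n + 3) := by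
  rw [IxS_sum n (fun x y z => φP x * φP y * φP z)]
  have e : ∀ n, φP (2 * n + 1) = bb n 1 := by intro n; simp [φP]
  rw [show 2 * n + 3 = 2 * (n + 1) + 1 by ring]
  simp only [e]
  rw [bb_ss, bb_s0, zero_add, ← bb_triple n 1 1 1]
  push_cast; rfl

lemma φ_sum2 (n : ℕ) :
    ∑ p ∈ IxS (2 * n + 3), (if Odd p.1 ∧ Odd (p.2 - p.1) ∧ Odd (2 * n + 3 - p.2) then
      φP p.1 * φP (p.2 - p.1) * φH (2 * n + 3 - p.2) else 0) = φH (2 * n + 3) - φP (2 * n + 3) := by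
  rw [IxS_sum n (fun x y z => φP x * φP y * φH z)]
  have e : ∀ n, φP (2 * n + 1) = bb n 1 := by intro n; simp [φP]
  have e' : ∀ n, φH (2 * n + 1) = bb n 2 := by intro n; simp [φH]
  rw [show 2 * n + 3 = 2 * (n + 1) + 1 by ring]
  simp only [e, e']
  rw [bb_ss n 1, show 1 + 3 = 1 + 1 + 2 by rfl, ← bb_triple n 1 1 2]
  push_cast; ring

end ONC

set_option linter.unusedSectionVars false
set_option linter.unusedVariables false
section ONC
variable {α : Type*} [Fintype α] [DecidableEq α]

lemma Sepp.split {c : Perm α} {a : α} {k l : ℕ} {S D : Finset α} (hI : Ix c a k l)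
    (hs : Sepp c S D) (hS : ∀ s ∈ S, s ≠ a → ¬ c.SameCycle a s) (hD : ∀ d ∈ D, ¬ c.SameCycle a d) :
    Sepp (sp c a k l) S (insert (c^[k] a) (insert (c^[l] a) D)) := by
  have key : ∀ y ∈ S ∪ D, y = a ∨ ¬ c.SameCycle a y := by
    intro y hy
    by_cases h : y = a
    · exact Or.inl h
    · rcases Finset.mem_union.1 hy with h1 | h1
      · exact Or.inr (hS y h1 h)
      · exact Or.inr (hD y h1)
  have hi : ∀ y ∈ S ∪ D, ¬ (sp c a k l).SameCycle (c^[k] a) y := by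
    intro y hy h
    rcases key y hy with rfl | h1
    · exact hI.nia h
    · exact h1 ((sc_it c a k).trans (hI.sc h))
  have hj : ∀ y ∈ S ∪ D, ¬ (sp c a k l).SameCycle (c^[l] a) y := by
    intro y hy h
    rcases key y hy with rfl | h1
    · exact hI.nja h
    · exact h1 ((sc_it c a l).trans (hI.sc h))
  have mem : ∀ y, y ∈ S ∪ insert (c^[k] a) (insert (c^[l] a) D) → y = c^[k] a ∨ y = c^[l] a ∨ y ∈ S ∪ D := by
    intro y hy
    simp only [Finset.mem_union, Finset.mem_insert] at *
    tauto
  refine ⟨?_, ?_⟩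
  · intro x hx y hy hxy
    rcases mem x hx with rfl | rfl | hx' <;> rcases mem y hy with rfl | rfl | hy'
    · rfl
    · exact absurd hxy hI.nij
    · exact absurd hxy (hi _ hy')
    · exact absurd hxy.symm hI.nij
    · rfl
    · exact absurd hxy (hj _ hy')
    · exact absurd hxy.symm (hi _ hx')
    · exact absurd hxy.symm (hj _ hx')
    · exact hs.sep x hx' y hy' (hI.sc hxy)
  · rw [Finset.disjoint_left]
    intro x hx hx'
    have hu : x ∈ S ∪ D := Finset.mem_union_left _ hx
    rcases Finset.mem_insert.1 hx' with rfl | hx'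
    · exact hi _ hu (SameCycle.refl _ _)
    rcases Finset.mem_insert.1 hx' with rfl | hx'
    · exact hj _ hu (SameCycle.refl _ _)
    exact (Finset.disjoint_left.1 hs.dis) hx hx'

lemma val_sp {c : Perm α} {a : α} {k l : ℕ} {S D : Finset α} (hI : Ix c a k l)
    (hS : ∀ s ∈ S, ¬ c.SameCycle a s) (hD : ∀ d ∈ D, ¬ c.SameCycle a d) :
    val (sp c a k l) S (insert (c^[k] a) (insert (c^[l] a) D)) =
    val c S D / φH (pd c a) * (φP k * φP (l - k) * φH (pd c a - l)) := by
  have hjD : c^[l] a ∉ D := fun h => hD _ h (sc_it _ _ _)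
  have hiD : c^[k] a ∉ insert (c^[l] a) D := by
    rw [Finset.mem_insert]
    rintro (h | h)
    · exact hI.inj.2.2 h
    · exact hD _ h (sc_it _ _ _)
  rw [val, val, Finset.prod_insert hiD, Finset.prod_insert hjD, hI.wt φH_pos, hI.pd_i, hI.pd_j,
    Finset.prod_congr rfl (fun s hs => by rw [hI.pd_x (hS s hs)]),
    Finset.prod_congr (s₁ := D) rfl (fun s hs => by rw [hI.pd_x (hD s hs)]), ← φH_rr k, ← φH_rr (l-k)]
  ring

lemma val_ins {c : Perm α} {a : α} {S D : Finset α} (h : a ∉ S) :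
    val c (insert a S) D = val c S D * rr (pd c a) := by
  rw [val, val, Finset.prod_insert h]; ring

lemma val_insD {c : Perm α} {a : α} {S D : Finset α} (h : a ∉ D) :
    val c S (insert a D) = val c S D * rr (pd c a) := by
  rw [val, val, Finset.prod_insert h]; ring

lemma KK_zero {c : Perm α} (h : ¬ AllOdd c) (S D : Finset α) : (KK c S D).card = 0 := by
  rw [Finset.card_eq_zero, Finset.eq_empty_iff_forall_notMem]
  intro x hx
  obtain ⟨⟨h1, h2, h3⟩, -⟩ := mem_KK.1 hx
  exact h ((RR_le h1 h2).2 h3)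

def IHH (α : Type*) [Fintype α] [DecidableEq α] (m : ℕ) : Prop :=
  ∀ (c : Perm α) (S D : Finset α), cyc c = (Fintype.card α : ℝ) - 2 * m → AllOdd c →
    Sepp c S D → ((KK c S D).card : ℝ) = val c S D

lemma pd_odd3 {c : Perm α} (hc : AllOdd c) {a : α} (ha : c a ≠ a) : ∃ n, pd c a = 2 * n + 3 := by
  have h1 : pd c a ≠ 1 := fun h => ha (pd_one_iff.1 h)
  obtain ⟨k, hk⟩ := hc a
  exact ⟨k - 1, by omega⟩

lemma peel_sum {m : ℕ} (ih : IHH α m) {c : Perm α} (h : cyc c = (Fintype.card α : ℝ) - 2 * ((m + 1 : ℕ) : ℝ))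
    (hc : AllOdd c) {S D : Finset α} (hs : Sepp c S D) {a : α}
    (hS : ∀ s ∈ S, s ≠ a → ¬ c.SameCycle a s) (hD : ∀ d ∈ D, ¬ c.SameCycle a d) :
    (((KK c S D).filter (fun x => x a ≠ c a)).card : ℝ) =
    ∑ p ∈ IxS (pd c a), if Odd p.1 ∧ Odd (p.2 - p.1) ∧ Odd (pd c a - p.2) then
      val (sp c a p.1 p.2) S (insert (c^[p.1] a) (insert (c^[p.2] a) D)) else 0 := by
  rw [peel c a S D hD, Nat.cast_sum]
  apply Finset.sum_congr rfl
  intro p hp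
  have hI := IxS_Ix.1 hp
  split_ifs with ho
  · apply ih _ _ _ _ (hI.odd.2 ⟨hc, ho⟩) (Sepp.split hI hs hS hD)
    rw [hI.cyc, h]; push_cast; ring
  · rw [KK_zero, Nat.cast_zero]
    intro h'
    exact ho (hI.odd.1 h').2

lemma caseS {m : ℕ} (ih : IHH α m) {c : Perm α} (h : cyc c = (Fintype.card α : ℝ) - 2 * ((m + 1 : ℕ) : ℝ))
    (hc : AllOdd c) {S D : Finset α} (hs : Sepp c S D) {a : α} (haS : a ∈ S) (ha : c a ≠ a) :
    ((KK c S D).card : ℝ) = val c S D := by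
  have hS : ∀ s ∈ S, s ≠ a → ¬ c.SameCycle a s := fun s hs' hsa h =>
    hsa (hs.sep a (Finset.mem_union_left _ haS) s (Finset.mem_union_left _ hs') h).symm
  have hD : ∀ d ∈ D, ¬ c.SameCycle a d := by
    intro d hd h
    have := hs.sep a (Finset.mem_union_left _ haS) d (Finset.mem_union_right _ hd) h
    subst this
    exact Finset.disjoint_left.1 hs.dis haS hd
  have hall : (KK c S D).filter (fun x => x a ≠ c a) = KK c S D := by
    apply Finset.filter_true_of_mem
    intro x hx
    rw [(mem_KK.1 hx).2.1 a haS]; exact ha.symm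
  rw [← hall, peel_sum ih h hc hs hS hD]
  obtain ⟨S0, ha0, rfl⟩ : ∃ S0, a ∉ S0 ∧ insert a S0 = S :=
    ⟨S.erase a, Finset.notMem_erase _ _, Finset.insert_erase haS⟩
  have hS0 : ∀ s ∈ S0, ¬ c.SameCycle a s := fun s hs' => hS s (Finset.mem_insert_of_mem hs')
    (by rintro rfl; exact ha0 hs')
  obtain ⟨n, hn⟩ := pd_odd3 hc ha
  have e : ∀ p ∈ IxS (pd c a), (if Odd p.1 ∧ Odd (p.2 - p.1) ∧ Odd (pd c a - p.2) then
      val (sp c a p.1 p.2) (insert a S0) (insert (c^[p.1] a) (insert (c^[p.2] a) D)) else 0) =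
      val c S0 D / φH (2 * n + 3) * (if Odd p.1 ∧ Odd (p.2 - p.1) ∧ Odd (2 * n + 3 - p.2) then
      φP p.1 * φP (p.2 - p.1) * φP (2 * n + 3 - p.2) else 0) := by
    intro p hp
    have hI := IxS_Ix.1 hp
    rw [val_ins ha0, val_sp hI hS0 hD, hI.pd_a, hn, ← φH_rr (2 * n + 3 - p.2)]
    split_ifs <;> ring
  rw [Finset.sum_congr rfl e, ← Finset.mul_sum, hn, φ_sum1, val_ins ha0, hn, rr]
  ring

lemma val_dual (c : Perm α) (S D : Finset α) : val c (D.image c) S = val c S D := by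
  rw [val, val, Finset.prod_image (fun x _ y _ h => c.injective h)]
  have : ∀ d, pd c (c d) = pd c d := fun d => pd_it c d 1
  simp only [this]
  ring

lemma Sepp.dual {c : Perm α} {S D : Finset α} (h : Sepp c S D) : Sepp c (D.image c) S := by
  have k1 : ∀ d ∈ D, ∀ s ∈ S, ¬ c.SameCycle d s := by
    intro d hd s hs' h'
    have := h.sep d (Finset.mem_union_right _ hd) s (Finset.mem_union_left _ hs') h'
    subst this
    exact Finset.disjoint_left.1 h.dis hs' hd
  refine ⟨?_, ?_⟩
  · intro x hx y hy hxy
    rcases Finset.mem_union.1 hx with hx | hx <;> rcases Finset.mem_union.1 hy with hy | hy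
    · obtain ⟨d, hd, rfl⟩ := Finset.mem_image.1 hx
      obtain ⟨d', hd', rfl⟩ := Finset.mem_image.1 hy
      rw [sameCycle_apply_left, sameCycle_apply_right] at hxy
      rw [h.sep d (Finset.mem_union_right _ hd) d' (Finset.mem_union_right _ hd') hxy]
    · obtain ⟨d, hd, rfl⟩ := Finset.mem_image.1 hx
      rw [sameCycle_apply_left] at hxy
      exact absurd hxy (k1 d hd y hy)
    · obtain ⟨d, hd, rfl⟩ := Finset.mem_image.1 hy
      rw [sameCycle_apply_right] at hxy
      exact absurd hxy.symm (k1 d hd x hx)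
    · exact h.sep x (Finset.mem_union_left _ hx) y (Finset.mem_union_left _ hy) hxy
  · rw [Finset.disjoint_left]
    intro x hx hx'
    obtain ⟨d, hd, rfl⟩ := Finset.mem_image.1 hx
    exact k1 d hd _ hx' (sc_it c d 1)

lemma caseD {m : ℕ} (ih : IHH α m) {c : Perm α} (h : cyc c = (Fintype.card α : ℝ) - 2 * ((m + 1 : ℕ) : ℝ))
    (hc : AllOdd c) {S D : Finset α} (hs : Sepp c S D) {a : α} (haD : a ∈ D) (ha : c a ≠ a) :
    ((KK c S D).card : ℝ) = val c S D := by
  rw [KK_dual, ← val_dual]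
  exact caseS ih h hc hs.dual (Finset.mem_image_of_mem c haD) (fun h => ha (c.injective h))

lemma main_step {m : ℕ} (ih : IHH α m) : IHH α (m + 1) := by
  intro c S D h hc hs
  by_cases h1 : ∃ a ∈ S, c a ≠ a
  · obtain ⟨a, haS, ha⟩ := h1
    exact caseS ih h hc hs haS ha
  by_cases h2 : ∃ a ∈ D, c a ≠ a
  · obtain ⟨a, haS, ha⟩ := h2
    exact caseD ih h hc hs haS ha
  push Not at h1 h2
  obtain ⟨a, ha⟩ : ∃ a, c a ≠ a := by
    by_contra! h3
    have : c = 1 := Equiv.ext h3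
    subst this
    rw [cyc_1] at h
    push_cast at h
    have : (0:ℝ) ≤ m := by positivity
    linarith
  have key : ∀ y, c y = y → ¬ c.SameCycle a y := by
    intro y hy h
    have := pd_sc h
    rw [pd_one_iff.2 hy] at this
    exact ha (pd_one_iff.1 this.symm)
  have hS : ∀ s ∈ S, ¬ c.SameCycle a s := fun s hs => key s (h1 s hs)
  have hD : ∀ s ∈ D, ¬ c.SameCycle a s := fun s hs => key s (h2 s hs)
  have haD : a ∉ D := fun h => ha (h2 a h)
  have haS : a ∉ S := fun h => ha (h1 a h)
  have hs' : Sepp c S (insert a D) := by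
    refine ⟨?_, ?_⟩
    · have mem : ∀ y, y ∈ S ∪ insert a D → y = a ∨ y ∈ S ∪ D := by
        intro y hy
        simp only [Finset.mem_union, Finset.mem_insert] at *
        tauto
      have kk : ∀ y ∈ S ∪ D, ¬ c.SameCycle a y := by
        intro y hy
        rcases Finset.mem_union.1 hy with h | h
        · exact hS y h
        · exact hD y h
      intro x hx y hy hxy
      rcases mem x hx with rfl | hx' <;> rcases mem y hy with rfl | hy'
      · rfl
      · exact absurd hxy (kk _ hy')
      · exact absurd hxy.symm (kk _ hx')
      · exact hs.sep x hx' y hy' hxy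
    · rw [Finset.disjoint_insert_right]
      exact ⟨haS, hs.dis⟩
  have hB := caseD ih h hc hs' (Finset.mem_insert_self a D) ha
  have hsplit : (KK c S D).card = (KK c S (insert a D)).card +
      ((KK c S D).filter (fun x => x a ≠ c a)).card := by
    rw [← Finset.card_filter_add_card_filter_not (s := KK c S D) (fun x => x a = c a)]
    congr 2
    ext x
    simp only [Finset.mem_filter, mem_KK, Finset.mem_insert, forall_eq_or_imp]
    tauto
  obtain ⟨n, hn⟩ := pd_odd3 hc ha
  rw [hsplit, Nat.cast_add, hB, peel_sum ih h hc hs (fun s hs _ => hS s hs) hD]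
  have e : ∀ p ∈ IxS (pd c a), (if Odd p.1 ∧ Odd (p.2 - p.1) ∧ Odd (pd c a - p.2) then
      val (sp c a p.1 p.2) S (insert (c^[p.1] a) (insert (c^[p.2] a) D)) else 0) =
      val c S D / φH (2 * n + 3) * (if Odd p.1 ∧ Odd (p.2 - p.1) ∧ Odd (2 * n + 3 - p.2) then
      φP p.1 * φP (p.2 - p.1) * φH (2 * n + 3 - p.2) else 0) := by
    intro p hp
    have hI := IxS_Ix.1 hp
    rw [val_sp hI hS hD, hn]
    split_ifs <;> ring
  rw [Finset.sum_congr rfl e, ← Finset.mul_sum, hn, φ_sum2, val_insD haD, hn, rr]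
  have := (φH_pos (2 * n + 3)).ne'
  field_simp
  ring

lemma rr_1 : rr 1 = 1 := by simp [rr, φP, φH, bb_0]

lemma main_zero : IHH α 0 := by
  intro c S D h hc hs
  have : c = 1 := cyc_eq (by rw [h]; simp)
  subst this
  have e : KK (1 : Perm α) S D = {1} := by
    ext x
    rw [mem_KK, Finset.mem_singleton]
    constructor
    · rintro ⟨⟨h1, h2, h3⟩, -⟩
      apply cyc_eq
      have a1 := cyc_le (c := x)
      have a2 := cyc_le (c := x⁻¹ * 1)
      rw [cyc_1] at h3
      linarith
    · rintro rfl
      refine ⟨⟨hc, by simpa using hc, by simp [cyc_1]⟩, fun _ _ => rfl, fun _ _ => rfl⟩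
  rw [e, val, wt_1 (by simp [φH, bb_0])]
  simp [pd_1, rr_1]

lemma main_all (m : ℕ) : IHH α m := by
  induction m with
  | zero => exact main_zero
  | succ m ih => exact main_step ih

end ONC

set_option linter.unusedSectionVars false
set_option linter.unusedVariables false

def Prd {N : ℕ} (x : Perm (Fin N)) : Prop :=
  ∃ l : List (Perm (Fin N)), (∀ t ∈ l, t.IsThreeCycle) ∧ l.prod = x

lemma Prd.mul {N : ℕ} {x y : Perm (Fin N)} (hx : Prd x) (hy : Prd y) : Prd (x * y) := by
  obtain ⟨s, hs, rfl⟩ := hx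
  obtain ⟨s', hs', rfl⟩ := hy
  refine ⟨s ++ s', ?_, by simp⟩
  intro t ht
  rcases List.mem_append.1 ht with h | h
  · exact hs t h
  · exact hs' t h

lemma Prd.inv {N : ℕ} {x : Perm (Fin N)} (hx : Prd x) : Prd x⁻¹ := by
  obtain ⟨s, hs, rfl⟩ := hx
  refine ⟨(s.map (fun x => x⁻¹)).reverse, ?_, by rw [List.prod_inv_reverse]⟩
  intro t ht
  rw [List.mem_reverse, List.mem_map] at ht
  obtain ⟨u, hu, rfl⟩ := ht
  exact (hs u hu).inv

lemma lenT_list {N : ℕ} {x : Perm (Fin N)} (h : Prd x) : ∃ l : List (Perm (Fin N)),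
    (∀ t ∈ l, t.IsThreeCycle) ∧ l.prod = x ∧ l.length = lenT (threeCycles N) x := by
  obtain ⟨s, hs, hp⟩ := h
  exact Nat.sInf_mem (s := {n | ∃ l : List (Perm (Fin N)), (∀ t ∈ l, t ∈ threeCycles N) ∧ l.prod = x ∧ l.length = n})
    ⟨s.length, s, hs, hp, rfl⟩

lemma lenT_pos {N : ℕ} {x : Perm (Fin N)} (h : 0 < lenT (threeCycles N) x) : Prd x := by
  obtain ⟨n, l, h1, h2, -⟩ := Nat.nonempty_of_pos_sInf h
  exact ⟨l, h1, h2⟩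

lemma lenT_odd {N : ℕ} {x : Perm (Fin N)} (h : AllOdd x) :
    cyc x = (Fintype.card (Fin N) : ℝ) - 2 * (lenT (threeCycles N) x : ℝ) := by
  obtain ⟨s, hs, hp, hl⟩ := odd_list h
  obtain ⟨s', hs', hp', hl'⟩ := lenT_list ⟨s, hs, hp⟩
  have h1 := geo1 s' hs'
  rw [hp', hl'] at h1
  have h2 : lenT (threeCycles N) x ≤ s.length := Nat.sInf_le ⟨s, hs, hp, rfl⟩
  have h3 : (lenT (threeCycles N) x : ℝ) ≤ s.length := by exact_mod_cast h2
  linarith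

lemma leT_RR {N : ℕ} {c x : Perm (Fin N)} (hc : AllOdd c) (hpos : 0 < lenT (threeCycles N) c) :
    leT (threeCycles N) x c ↔ RR c x := by
  have hcc := lenT_odd hc
  rw [leT]
  constructor
  · intro h
    have hP : Prd x ∧ Prd (x⁻¹ * c) := by
      have h1 := lenT_pos hpos
      by_cases h0 : 0 < lenT (threeCycles N) x
      · have h2 := lenT_pos h0
        exact ⟨h2, h2.inv.mul h1⟩
      · have h2 : Prd (x⁻¹ * c) := lenT_pos (by omega)
        refine ⟨?_, h2⟩
        have := h1.mul h2.inv
        rwa [show c * (x⁻¹ * c)⁻¹ = x by group] at this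
    obtain ⟨s, hs, hp, hl⟩ := lenT_list hP.1
    obtain ⟨s', hs', hp', hl'⟩ := lenT_list hP.2
    rw [h, ← hl, ← hl'] at hcc
    push_cast at hcc
    have a1 := geo1 s hs
    have a2 := geo1 s' hs'
    have b1 := geo s' hs' x
    have b2 := geo s hs (x⁻¹ * c)
    have c1 := geo_odd s hs
    have c2 := geo_odd s' hs'
    rw [hp] at a1 b2 c1
    rw [hp'] at a2 b1 c2
    rw [show x * (x⁻¹ * c) = c by group] at b1
    have e : x⁻¹ * c * x = x⁻¹ * c * (x⁻¹)⁻¹ := by group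
    rw [e, cyc_conj] at b2
    exact ⟨c1 (by linarith), c2 (by linarith), by linarith⟩
  · rintro ⟨h1, h2, h3⟩
    rw [lenT_odd h1, lenT_odd h2, hcc] at h3
    have : (lenT (threeCycles N) c : ℝ) = lenT (threeCycles N) x + lenT (threeCycles N) (x⁻¹ * c) := by
      linarith
    exact_mod_cast this

lemma rot_pd (n : ℕ) (hn : 1 ≤ n) (x : Fin (2 * n + 1)) :
    pd (finRotate (2 * n + 1)) x = Fintype.card (Fin (2 * n + 1)) := by
  have h1 : (finRotate (2 * n + 1)).IsCycle := isCycle_finRotate_of_le (by omega)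
  have h2 : (finRotate (2 * n + 1)).support = Finset.univ := support_finRotate_of_le (by omega)
  have hm : ∀ y, finRotate (2 * n + 1) y ≠ y := fun y => by
    rw [← Perm.mem_support, h2]; exact Finset.mem_univ _
  have h3 := sum_cyc (finRotate (2 * n + 1)) x (fun _ => (1 : ℝ))
  rw [Finset.filter_false_of_mem (fun y _ => by
    rw [not_not]; exact h1.sameCycle (hm x) (hm y))] at h3
  simp only [Finset.sum_const, Finset.card_univ, Finset.card_empty, Finset.card_range, nsmul_eq_mul,
    mul_one, Nat.cast_zero, zero_add] at h3
  exact_mod_cast h3.symm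

theorem stmt17 (n : ℕ) (hn : 1 ≤ n) :
    -- |ONC_{2n+1}| = (1/(n+1)) C(3n+1, n) ...
    (n+1) * Nat.card {x : Perm (Fin (2*n+1)) //
        leT (threeCycles (2*n+1)) x (finRotate (2*n+1))}
      = Nat.choose (3*n+1) n
    -- ... and the number of maximal chains of [e,c]₃, i.e. of minimal factorizations
    -- of c into n 3-cycles, is (2n+1)^{n-1}.
    ∧ Nat.card {w : Fin n → Perm (Fin (2*n+1)) //
        (∀ i, (w i).IsThreeCycle) ∧ (List.ofFn w).prod = finRotate (2*n+1)}
      = (2*n+1) ^ (n-1) := by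
  have hpd := rot_pd n hn
  have hodd : AllOdd (finRotate (2 * n + 1)) := by
    intro x; rw [hpd, Fintype.card_fin]; exact ⟨n, rfl⟩
  have hcyc : cyc (finRotate (2 * n + 1)) = (Fintype.card (Fin (2 * n + 1)) : ℝ) - 2 * n := by
    rw [cyc]
    simp only [hpd, Fintype.card_fin]
    rw [Finset.sum_const, Finset.card_univ, Fintype.card_fin, nsmul_eq_mul]
    have : ((2 * n + 1 : ℕ) : ℝ) ≠ 0 := by positivity
    rw [mul_one_div_cancel this]
    push_cast; ring
  constructor
  · have hl : lenT (threeCycles (2 * n + 1)) (finRotate (2 * n + 1)) = n := by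
      have := lenT_odd hodd
      rw [hcyc] at this
      have h : (lenT (threeCycles (2 * n + 1)) (finRotate (2 * n + 1)) : ℝ) = n := by linarith
      exact_mod_cast h
    have e : Nat.card {x : Perm (Fin (2*n+1)) //
        leT (threeCycles (2*n+1)) x (finRotate (2*n+1))} = (KK (finRotate (2 * n + 1)) ∅ ∅).card := by
      rw [← Nat.card_eq_finsetCard]
      apply Nat.card_congr
      apply Equiv.subtypeEquivRight
      intro x
      rw [leT_RR hodd (by omega), mem_KK]
      simp
    have h := main_all n (finRotate (2 * n + 1)) ∅ ∅ hcyc hodd ⟨by simp, by simp⟩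
    rw [val, wt_single φH_pos hpd, Fintype.card_fin, φH] at h
    simp only [Finset.prod_empty, mul_one] at h
    rw [show (2 * n + 1 - 1) / 2 = n by omega] at h
    have h' : (KK (finRotate (2 * n + 1)) ∅ ∅).card = bb n 2 := by exact_mod_cast h
    rw [e, h', bb_two]
  · have h := GG_main n (finRotate (2 * n + 1)) hcyc
    rw [GG_card, if_pos hodd, wt_single φ2_pos hpd, Fintype.card_fin, φ2,
      show (2 * n + 1 - 1) / 2 = n by omega] at h
    obtain ⟨m, rfl⟩ : ∃ m, n = m + 1 := ⟨n - 1, by omega⟩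
    have hf : ((m + 1).factorial : ℝ) ≠ 0 := by positivity
    rw [ab, mul_div_cancel₀ _ hf, one_mul] at h
    rw [Nat.add_sub_cancel]
    have h2 : (Nat.card {w : Fin (m + 1) → Perm (Fin (2 * (m + 1) + 1)) //
        (∀ i, (w i).IsThreeCycle) ∧ (List.ofFn w).prod = finRotate (2 * (m + 1) + 1)} : ℝ) =
        ((2 * (m + 1) + 1 : ℕ) : ℝ) ^ m := by
      rw [h]; push_cast; ring
    exact_mod_cast h2
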